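/- arXiv:1506.03628 — 2 statements merged into one kernel-verified Lean document; each statement's English description precedes it below -/
import Mathlib

section
/- Let N ≥ 2 be an integer, ω > 0, and 1 < p < p_max, and let u be a ground-state profile of (QLS). Suppose v : ℝ^N → ℝ is smooth, radially symmetric, not identically zero, satisfies ∫_{ℝ^N}(v² + |∇v|²) dx < ∞, and solves L₊v = 0 pointwise on ℝ^N. Then v changes sign: there exist points x, y ∈ ℝ^N with v(x) > 0 and v(y) < 0. -/
open MeasureTheory Real Filter Topology

noncomputable section

/-- Partial derivative along the `i`-th coordinate direction. -/
def pd {N : ℕ} {F : Type*} [NormedAddCommGroup F] [NormedSpace ℝ F]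
    (i : Fin N) (f : EuclideanSpace ℝ (Fin N) → F) (x : EuclideanSpace ℝ (Fin N)) : F :=
  fderiv ℝ f x (EuclideanSpace.single i 1)

/-- Euclidean Laplacian. -/
def lap {N : ℕ} {F : Type*} [NormedAddCommGroup F] [NormedSpace ℝ F]
    (f : EuclideanSpace ℝ (Fin N) → F) (x : EuclideanSpace ℝ (Fin N)) : F :=
  ∑ i : Fin N, pd i (pd i f) x

/-- Squared norm of the gradient of a real-valued function: `|∇f|²`. -/
def gradsq {N : ℕ} (f : EuclideanSpace ℝ (Fin N) → ℝ) (x : EuclideanSpace ℝ (Fin N)) : ℝ :=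
  ∑ i : Fin N, (pd i f x) ^ 2

/-- A ground-state profile of the quasilinear Schrödinger equation (QLS)
`-Δu - uΔ(u²) + ωu - u^p = 0` on `ℝ^N`: smooth, positive, radially symmetric with a
strictly decreasing positive profile, solves (QLS) pointwise, and decays
exponentially together with all its derivatives. -/
structure IsGroundState (N : ℕ) (ω p : ℝ) (u : EuclideanSpace ℝ (Fin N) → ℝ) : Prop where
  smooth : ContDiff ℝ (⊤ : ℕ∞) u
  pos : ∀ x, 0 < u x
  radial : ∃ U : ℝ → ℝ, StrictAntiOn U (Set.Ici 0) ∧ (∀ r, 0 ≤ r → 0 < U r) ∧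
      ∀ x, u x = U ‖x‖
  solves : ∀ x, -lap u x - u x * lap (fun y => (u y) ^ 2) x + ω * u x - (u x) ^ p = 0
  decay : ∀ k : ℕ, ∃ C > 0, ∃ δ > 0, ∀ x,
      ‖iteratedFDeriv ℝ k u x‖ ≤ C * Real.exp (-δ * ‖x‖)

/-- The linearized operator `L₊` around `u` (real-valued functions). -/
def Lplus {N : ℕ} (ω p : ℝ) (u η : EuclideanSpace ℝ (Fin N) → ℝ)
    (x : EuclideanSpace ℝ (Fin N)) : ℝ :=
  -lap η x - 2 * u x * lap (fun y => u y * η y) x + ω * η x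
    - (lap (fun y => (u y) ^ 2) x + p * u x ^ (p - 1)) * η x

/-- The linearized operator `L₋` around `u`. -/
def Lminus {N : ℕ} (ω p : ℝ) (u ζ : EuclideanSpace ℝ (Fin N) → ℝ)
    (x : EuclideanSpace ℝ (Fin N)) : ℝ :=
  -lap ζ x + ω * ζ x - (lap (fun y => (u y) ^ 2) x + u x ^ (p - 1)) * ζ x

/-! Write `u x = U ‖x‖` and `v x = V ‖x‖`. Differentiating the radial form of (QLS) gives
`L₊ U' = -((N - 1) / r²) (1 + 2 U²) U'`, whereas `L₊ V = 0`. By the Lagrange identity the weighted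
Wronskian `G = r ^ (N - 1) (1 + 2 U²) (U'' V - U' V')` therefore satisfies
`G' = (N - 1) r ^ (N - 3) (1 + 2 U²) U' V`. If `V ≥ 0`, then `G` is antitone because `U' ≤ 0`, and
`G 0 = 0`. Finite energy makes `V² + V'² < 1` hold at arbitrarily large radii, where the exponential
decay of `U'` and `U''` makes `G` small. Hence `G = 0`, so `U' V = 0`, and `V = 0` because `U` is
strictly decreasing. The case `V ≤ 0` follows by replacing `v` with `-v`.
-/

/-! ### Real functions on a half-line -/

lemma eqOn_zero_of_antitoneOn_of_frequently_abs_lt {f : ℝ → ℝ} {a : ℝ}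
    (hf : AntitoneOn f (Set.Ici a)) (hfa : f a = 0)
    (hsmall : ∀ ε > 0, ∃ᶠ r in atTop, |f r| < ε) : Set.EqOn f 0 (Set.Ici a) := by
  intro r hr
  by_contra hne
  have hle : f r ≤ 0 := hfa ▸ hf Set.self_mem_Ici hr hr
  have hneg : f r < 0 := lt_of_le_of_ne hle hne
  obtain ⟨s, hs_small, hrs⟩ :=
    ((hsmall (-f r) (neg_pos.2 hneg)).and_eventually (eventually_ge_atTop r)).exists
  have hanti : f s ≤ f r := hf hr (le_trans hr hrs) hrs
  linarith [(abs_lt.1 hs_small).1]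

lemma eqOn_zero_of_strictAntiOn_of_deriv_mul_eq_zero {f g : ℝ → ℝ} {a : ℝ}
    (hf : Differentiable ℝ f) (hanti : StrictAntiOn f (Set.Ici a))
    (hg : ContinuousOn g (Set.Ici a)) (hfg : ∀ r, a < r → deriv f r * g r = 0) :
    Set.EqOn g 0 (Set.Ici a) := by
  intro r (hr : a ≤ r)
  by_contra hne
  have hg_ne : ∀ᶠ s in 𝓝[>] r, g s ≠ 0 :=
    ((hg r hr).mono (Set.Ioi_subset_Ici hr)).eventually_ne hne
  obtain ⟨b, (hrb : r < b), hb⟩ := mem_nhdsGT_iff_exists_Ioo_subset.1 hg_ne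
  obtain ⟨c, hc, hslope⟩ := exists_deriv_eq_slope f hrb hf.continuous.continuousOn
    hf.differentiableOn
  have hderiv : deriv f c = 0 :=
    (mul_eq_zero.1 (hfg c (lt_of_le_of_lt hr hc.1))).resolve_right (hb hc)
  have hlt : f b < f r := hanti hr (Set.mem_Ici.2 (hr.trans hrb.le)) hrb
  have hslope_neg : (f b - f r) / (b - r) < 0 :=
    div_neg_of_neg_of_pos (sub_neg.2 hlt) (sub_pos.2 hrb)
  linarith

lemma deriv_nonpos_of_antitoneOn_Ici {f : ℝ → ℝ} {a r : ℝ} (hf : AntitoneOn f (Set.Ici a))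
    (hr : a < r) : deriv f r ≤ 0 := by
  rw [← derivWithin_of_mem_nhds (Ici_mem_nhds hr)]
  exact hf.derivWithin_nonpos

lemma frequently_abs_mul_sub_mul_lt {α : Type*} {l : Filter α} {a b f g : α → ℝ}
    (ha : Tendsto a l (𝓝 0)) (hb : Tendsto b l (𝓝 0))
    (hfg : ∃ᶠ r in l, f r ^ 2 + g r ^ 2 < 1) {ε : ℝ} (hε : 0 < ε) :
    ∃ᶠ r in l, |a r * f r - b r * g r| < ε := by
  have hab : ∀ᶠ r in l, |a r| < ε / 2 ∧ |b r| < ε / 2 := by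
    simpa [Real.norm_eq_abs] using
      (NormedAddGroup.tendsto_nhds_zero.1 ha _ (half_pos hε)).and
        (NormedAddGroup.tendsto_nhds_zero.1 hb _ (half_pos hε))
  refine (hfg.and_eventually hab).mono fun r ⟨hlt, har, hbr⟩ => ?_
  have hf : |f r| ≤ 1 := (sq_le_one_iff_abs_le_one _).1 (by linarith [sq_nonneg (g r), hlt])
  have hg : |g r| ≤ 1 := (sq_le_one_iff_abs_le_one _).1 (by linarith [sq_nonneg (f r), hlt])
  calc |a r * f r - b r * g r| ≤ |a r| * |f r| + |b r| * |g r| := by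
        simpa only [abs_mul] using abs_sub (a r * f r) (b r * g r)
    _ ≤ |a r| * 1 + |b r| * 1 := by gcongr
    _ < ε := by linarith [har, hbr]

lemma tendsto_pow_mul_of_abs_le_exp {f : ℝ → ℝ} {C δ : ℝ} (hδ : 0 < δ)
    (hf : ∀ r, 0 ≤ r → |f r| ≤ C * exp (-δ * r)) (j : ℕ) :
    Tendsto (fun r => r ^ j * f r) atTop (𝓝 0) := by
  have hexp : Tendsto (fun r : ℝ => C * (r ^ j * exp (-δ * r))) atTop (𝓝 0) := by
    simpa using (tendsto_rpow_mul_exp_neg_mul_atTop_nhds_zero (j : ℝ) δ hδ).const_mul C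
  refine squeeze_zero_norm' ?_ hexp
  filter_upwards [eventually_ge_atTop 0] with r hr
  rw [norm_mul, Real.norm_of_nonneg (pow_nonneg hr j), Real.norm_eq_abs]
  calc r ^ j * |f r| ≤ r ^ j * (C * exp (-δ * r)) := by gcongr; exact hf r hr
    _ = C * (r ^ j * exp (-δ * r)) := by ring

/-! ### Radial functions -/

section RayProfile

variable {E : Type*} [NormedAddCommGroup E] [NormedSpace ℝ E]

/-- The restriction of `f` to the line through `e`. For radial `f` and a unit vector `e` this is
the radial profile of `f`, extended evenly to negative radii so that it inherits the smoothness
of `f` at the origin. -/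
def rayProfile (e : E) (f : E → ℝ) (r : ℝ) : ℝ := f (r • e)

lemma rayProfile_norm {e : E} (he : ‖e‖ = 1) {f : E → ℝ}
    (hf : ∀ x y, ‖x‖ = ‖y‖ → f x = f y) (x : E) : rayProfile e f ‖x‖ = f x :=
  hf _ _ (by rw [norm_smul, norm_norm, he, mul_one])

lemma contDiff_rayProfile (e : E) {f : E → ℝ} {n : WithTop ℕ∞} (hf : ContDiff ℝ n f) :
    ContDiff ℝ n (rayProfile e f) :=
  hf.comp (contDiff_id.smul contDiff_const)

lemma norm_iteratedDeriv_rayProfile_le (e : E) {f : E → ℝ} {k : ℕ} (hf : ContDiff ℝ k f) (r : ℝ) :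
    ‖iteratedDeriv k (rayProfile e f) r‖ ≤ ‖iteratedFDeriv ℝ k f (r • e)‖ * ‖e‖ ^ k := by
  have hcomp : rayProfile e f = f ∘ ContinuousLinearMap.toSpanSingleton ℝ e := by
    ext s
    simp [rayProfile]
  rw [← norm_iteratedFDeriv_eq_norm_iteratedDeriv, hcomp,
    ContinuousLinearMap.iteratedFDeriv_comp_right _ hf _ le_rfl]
  simpa using ContinuousMultilinearMap.norm_compContinuousLinearMap_le
    (iteratedFDeriv ℝ k f (r • e)) fun _ => ContinuousLinearMap.toSpanSingleton ℝ e

end RayProfile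

lemma hasFDerivAt_norm_of_ne_zero {E : Type*} [NormedAddCommGroup E] [InnerProductSpace ℝ E]
    {x : E} (hx : x ≠ 0) : HasFDerivAt (fun y : E => ‖y‖) (‖x‖⁻¹ • innerSL ℝ x) x := by
  have hsq : HasFDerivAt (fun y : E => ‖y‖ ^ 2) (2 • innerSL ℝ x) x :=
    (hasStrictFDerivAt_norm_sq x).hasFDerivAt
  have hsqrt := hsq.sqrt (pow_ne_zero 2 (norm_ne_zero_iff.2 hx))
  simp only [Real.sqrt_sq (norm_nonneg _)] at hsqrt
  refine hsqrt.congr_fderiv ?_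
  ext h
  simp only [smul_apply, coe_innerSL_apply, nsmul_eq_mul, smul_eq_mul]
  field_simp
  norm_num

section CompNorm

variable {N : ℕ} {F : ℝ → ℝ} {x : EuclideanSpace ℝ (Fin N)}

lemma pd_comp_norm (hx : x ≠ 0) (hF : DifferentiableAt ℝ F ‖x‖) (i : Fin N) :
    pd i (fun y => F ‖y‖) x = deriv F ‖x‖ / ‖x‖ * x i := by
  have h : HasFDerivAt (fun y => F ‖y‖) (deriv F ‖x‖ • ‖x‖⁻¹ • innerSL ℝ x) x :=
    hF.hasDerivAt.comp_hasFDerivAt x (hasFDerivAt_norm_of_ne_zero hx)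
  rw [pd, h.fderiv]
  simp only [smul_smul, smul_apply, innerSL_apply_apply,
    EuclideanSpace.inner_single_right]
  simp [div_eq_mul_inv]

lemma gradsq_comp_norm (hx : x ≠ 0) (hF : DifferentiableAt ℝ F ‖x‖) :
    gradsq (fun y => F ‖y‖) x = deriv F ‖x‖ ^ 2 := by
  have hr : ‖x‖ ≠ 0 := norm_ne_zero_iff.2 hx
  simp only [gradsq, pd_comp_norm hx hF, mul_pow]
  rw [← Finset.mul_sum, ← EuclideanSpace.real_norm_sq_eq]
  field_simp

lemma pd_mul_coord {f : EuclideanSpace ℝ (Fin N) → ℝ} (hf : DifferentiableAt ℝ f x) (i : Fin N) :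
    pd i (fun y => f y * y i) x = f x + pd i f x * x i := by
  have hcoord : HasFDerivAt (fun y : EuclideanSpace ℝ (Fin N) => y i)
      (EuclideanSpace.proj (𝕜 := ℝ) i) x := (EuclideanSpace.proj (𝕜 := ℝ) i).hasFDerivAt
  rw [pd, (hf.hasFDerivAt.fun_mul hcoord).fderiv]
  simp [pd, mul_comm]

lemma pd_pd_comp_norm (hx : x ≠ 0) (hF : ContDiffAt ℝ 2 F ‖x‖) (i : Fin N) :
    pd i (pd i fun y => F ‖y‖) x =
      deriv F ‖x‖ / ‖x‖ + deriv (fun s => deriv F s / s) ‖x‖ / ‖x‖ * x i ^ 2 := by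
  have hpd : pd i (fun y => F ‖y‖) =ᶠ[𝓝 x] fun y => deriv F ‖y‖ / ‖y‖ * y i := by
    filter_upwards [isOpen_ne.mem_nhds hx,
      continuous_norm.continuousAt.eventually (hF.eventually (by simp))] with y hy hFy
    exact pd_comp_norm hy (hFy.differentiableAt (by simp)) i
  have hdF : DifferentiableAt ℝ (deriv F) ‖x‖ :=
    (hF.derivWithin (m := 1) le_rfl).differentiableAt (by simp)
  have hquot : DifferentiableAt ℝ (fun s => deriv F s / s) ‖x‖ :=
    hdF.div differentiableAt_id (norm_ne_zero_iff.2 hx)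
  have hquot_norm : DifferentiableAt ℝ (fun y => deriv F ‖y‖ / ‖y‖) x :=
    hquot.comp x (hasFDerivAt_norm_of_ne_zero hx).differentiableAt
  rw [pd, hpd.fderiv_eq, ← pd, pd_mul_coord hquot_norm, pd_comp_norm hx hquot]
  ring

end CompNorm

/-- The Laplacian `F'' + (n / r) F'` on `ℝ^(n + 1)` in the radial variable. -/
def radialLap (n : ℕ) (F : ℝ → ℝ) (r : ℝ) : ℝ :=
  deriv (deriv F) r + n / r * deriv F r

lemma lap_comp_norm {n : ℕ} {F : ℝ → ℝ} {x : EuclideanSpace ℝ (Fin (n + 1))} (hx : x ≠ 0)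
    (hF : ContDiffAt ℝ 2 F ‖x‖) : lap (fun y => F ‖y‖) x = radialLap n F ‖x‖ := by
  have hr : ‖x‖ ≠ 0 := norm_ne_zero_iff.2 hx
  have hdF : DifferentiableAt ℝ (deriv F) ‖x‖ :=
    (hF.derivWithin (m := 1) le_rfl).differentiableAt (by simp)
  have hquot : deriv (fun s => deriv F s / s) ‖x‖ =
      (deriv (deriv F) ‖x‖ * ‖x‖ - deriv F ‖x‖) / ‖x‖ ^ 2 := by
    simpa using (hdF.hasDerivAt.fun_div (hasDerivAt_id' ‖x‖) hr).deriv
  simp only [lap, pd_pd_comp_norm hx hF, hquot, radialLap]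
  rw [Finset.sum_add_distrib, ← Finset.mul_sum, ← EuclideanSpace.real_norm_sq_eq]
  simp only [Finset.sum_const, Finset.card_univ, Fintype.card_fin, nsmul_eq_mul]
  push_cast
  field_simp
  ring

lemma radialLap_mul (n : ℕ) {F G : ℝ → ℝ} (hF : ContDiff ℝ 2 F) (hG : ContDiff ℝ 2 G) (r : ℝ) :
    radialLap n (fun s => F s * G s) r =
      radialLap n F r * G r + 2 * deriv F r * deriv G r + F r * radialLap n G r := by
  have hF0 : Differentiable ℝ F := hF.differentiable (by simp)
  have hG0 : Differentiable ℝ G := hG.differentiable (by simp)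
  have hF1 : Differentiable ℝ (deriv F) := hF.differentiable_deriv_two
  have hG1 : Differentiable ℝ (deriv G) := hG.differentiable_deriv_two
  have hderiv : deriv (fun s => F s * G s) = fun s => deriv F s * G s + F s * deriv G s :=
    funext fun s => deriv_fun_mul (hF0 s) (hG0 s)
  have hderiv2 := (((hF1 r).hasDerivAt.fun_mul (hG0 r).hasDerivAt).fun_add
    ((hF0 r).hasDerivAt.fun_mul (hG1 r).hasDerivAt)).deriv
  simp only [radialLap, hderiv, hderiv2]
  ring

lemma radialLap_sq (n : ℕ) {F : ℝ → ℝ} (hF : ContDiff ℝ 2 F) (r : ℝ) :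
    radialLap n (fun s => F s ^ 2) r = 2 * F r * radialLap n F r + 2 * deriv F r ^ 2 := by
  simp only [sq, radialLap_mul n hF hF]
  ring

lemma hasDerivAt_radialLap (n : ℕ) {F : ℝ → ℝ} (hF : ContDiff ℝ 3 F) {r : ℝ} (hr : r ≠ 0) :
    HasDerivAt (radialLap n F) (radialLap n (deriv F) r - n / r ^ 2 * deriv F r) r := by
  have hF1 : ContDiff ℝ 2 (deriv F) := hF.deriv'
  have hF2 : ContDiff ℝ 1 (deriv (deriv F)) := hF1.deriv'
  have hd1 : HasDerivAt (deriv F) (deriv (deriv F) r) r :=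
    (hF1.differentiable (by simp) r).hasDerivAt
  have hd2 : HasDerivAt (deriv (deriv F)) (deriv (deriv (deriv F)) r) r :=
    (hF2.differentiable (by simp) r).hasDerivAt
  have hinv : HasDerivAt (fun s : ℝ => n / s) (-n / r ^ 2) r := by
    simpa [div_eq_mul_inv] using (hasDerivAt_inv hr).const_mul (n : ℝ)
  refine (hd2.add (hinv.mul hd1)).congr_deriv ?_
  simp only [radialLap]
  ring

/-! ### The radial equations -/

/-- The left-hand side of (QLS) on `ℝ^(n + 1)` in the radial variable, with the derivatives
expanded. -/
def radialQLS (n : ℕ) (ω p : ℝ) (U : ℝ → ℝ) (r : ℝ) : ℝ :=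
  -(1 + 2 * U r ^ 2) * radialLap n U r - 2 * U r * deriv U r ^ 2 + ω * U r - U r ^ p

/-- The zeroth-order coefficient of `L₊` in the radial variable. -/
def radialPotential (n : ℕ) (ω p : ℝ) (U : ℝ → ℝ) (r : ℝ) : ℝ :=
  ω - 4 * U r * radialLap n U r - 2 * deriv U r ^ 2 - p * U r ^ (p - 1)

/-- The operator `L₊` on `ℝ^(n + 1)` in the radial variable, with the derivatives expanded. -/
def radialLplus (n : ℕ) (ω p : ℝ) (U V : ℝ → ℝ) (r : ℝ) : ℝ :=
  -(1 + 2 * U r ^ 2) * radialLap n V r - 4 * U r * deriv U r * deriv V r +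
    radialPotential n ω p U r * V r

lemma qls_comp_norm {n : ℕ} {U : ℝ → ℝ} (hU : ContDiff ℝ 2 U) (ω p : ℝ)
    {x : EuclideanSpace ℝ (Fin (n + 1))} (hx : x ≠ 0) :
    -lap (fun y => U ‖y‖) x - U ‖x‖ * lap (fun y => U ‖y‖ ^ 2) x + ω * U ‖x‖ - U ‖x‖ ^ p =
      radialQLS n ω p U ‖x‖ := by
  rw [lap_comp_norm hx hU.contDiffAt, lap_comp_norm (F := fun s => U s ^ 2) hx
    (hU.pow 2).contDiffAt, radialLap_sq n hU, radialQLS]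
  ring

lemma Lplus_comp_norm {n : ℕ} {U V : ℝ → ℝ} (hU : ContDiff ℝ 2 U) (hV : ContDiff ℝ 2 V)
    (ω p : ℝ) {x : EuclideanSpace ℝ (Fin (n + 1))} (hx : x ≠ 0) :
    Lplus ω p (fun y => U ‖y‖) (fun y => V ‖y‖) x = radialLplus n ω p U V ‖x‖ := by
  rw [Lplus, lap_comp_norm hx hV.contDiffAt, lap_comp_norm (F := fun s => U s ^ 2) hx
    (hU.pow 2).contDiffAt, lap_comp_norm (F := fun s => U s * V s) hx (hU.mul hV).contDiffAt,
    radialLap_sq n hU, radialLap_mul n hU hV, radialLplus, radialPotential]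
  ring

lemma hasDerivAt_radialQLS (n : ℕ) (ω p : ℝ) {U : ℝ → ℝ} (hU : ContDiff ℝ 3 U) {r : ℝ}
    (hr : r ≠ 0) (hUr : U r ≠ 0) :
    HasDerivAt (radialQLS n ω p U)
      (radialLplus n ω p U (deriv U) r + n / r ^ 2 * (1 + 2 * U r ^ 2) * deriv U r) r := by
  have hd0 : HasDerivAt U (deriv U r) r := (hU.differentiable (by simp) r).hasDerivAt
  have hd1 : HasDerivAt (deriv U) (deriv (deriv U) r) r :=
    ((hU.deriv' (n := 2)).differentiable (by simp) r).hasDerivAt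
  have hcoeff := ((hd0.pow 2).const_mul 2).const_add 1
  have hgrad := (hd0.const_mul 2).mul (hd1.pow 2)
  have hpow := hd0.rpow_const (p := p) (Or.inl hUr)
  refine ((((hcoeff.neg.mul (hasDerivAt_radialLap n hU hr)).sub hgrad).add
    (hd0.const_mul ω)).sub hpow).congr_deriv ?_
  simp only [Pi.pow_apply, Pi.neg_apply, radialLplus, radialPotential]
  push_cast
  ring

/-- The Wronskian of `f` and `g` with the weight `r ^ n (1 + 2 U²)` that makes the radial `L₊`
formally self-adjoint. -/
def radialWronskian (n : ℕ) (U f g : ℝ → ℝ) (r : ℝ) : ℝ :=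
  r ^ n * (1 + 2 * U r ^ 2) * (deriv f r * g r - f r * deriv g r)

lemma hasDerivAt_radialWronskian (n : ℕ) (ω p : ℝ) {U f g : ℝ → ℝ} (hU : Differentiable ℝ U)
    (hf : ContDiff ℝ 2 f) (hg : ContDiff ℝ 2 g) {r : ℝ} (hr : r ≠ 0) :
    HasDerivAt (radialWronskian n U f g)
      (r ^ n * (f r * radialLplus n ω p U g r - g r * radialLplus n ω p U f r)) r := by
  have hf0 : HasDerivAt f (deriv f r) r := (hf.differentiable (by simp) r).hasDerivAt
  have hg0 : HasDerivAt g (deriv g r) r := (hg.differentiable (by simp) r).hasDerivAt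
  have hf1 : HasDerivAt (deriv f) (deriv (deriv f) r) r :=
    (hf.differentiable_deriv_two r).hasDerivAt
  have hg1 : HasDerivAt (deriv g) (deriv (deriv g) r) r :=
    (hg.differentiable_deriv_two r).hasDerivAt
  have hpow : HasDerivAt (fun s : ℝ => s ^ n) (r ^ n * (n / r)) r := by
    refine (hasDerivAt_pow n r).congr_deriv ?_
    cases n with
    | zero => simp
    | succ k => rw [Nat.add_sub_cancel, pow_succ]; field_simp
  have hcoeff := (((hU r).hasDerivAt.pow 2).const_mul 2).const_add 1
  refine ((hpow.mul hcoeff).mul ((hf1.mul hg0).sub (hf0.mul hg1))).congr_deriv ?_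
  simp only [Pi.pow_apply, Pi.sub_apply, Pi.mul_apply, radialLplus, radialLap]
  push_cast
  ring

lemma continuous_radialWronskian (n : ℕ) {U f g : ℝ → ℝ} (hU : Continuous U)
    (hf : ContDiff ℝ 1 f) (hg : ContDiff ℝ 1 g) : Continuous (radialWronskian n U f g) := by
  have hweight : Continuous fun r => r ^ n * (1 + 2 * U r ^ 2) := by fun_prop
  exact hweight.mul (((hf.continuous_deriv le_rfl).mul hg.continuous).sub
    (hf.continuous.mul (hg.continuous_deriv le_rfl)))

/-! ### Kernel of `L₊` along a ground state -/

/-- The properties of the radial profile `U` of a ground state on `ℝ^(n + 1)` that determine the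
sign behaviour of the radial kernel of `L₊`. -/
structure IsRadialGroundState (n : ℕ) (ω p : ℝ) (U : ℝ → ℝ) : Prop where
  contDiff : ContDiff ℝ 3 U
  pos : ∀ r, 0 < r → 0 < U r
  strictAntiOn : StrictAntiOn U (Set.Ici 0)
  solves : ∀ r, 0 < r → radialQLS n ω p U r = 0
  decay : ∀ k ≤ 2, ∀ j : ℕ, Tendsto (fun r => r ^ j * deriv^[k] U r) atTop (𝓝 0)

namespace IsRadialGroundState

variable {n : ℕ} {ω p : ℝ} {U V : ℝ → ℝ}

lemma radialLplus_deriv (hU : IsRadialGroundState n ω p U) {r : ℝ} (hr : 0 < r) :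
    radialLplus n ω p U (deriv U) r = -(n / r ^ 2 * (1 + 2 * U r ^ 2) * deriv U r) := by
  have hzero : radialQLS n ω p U =ᶠ[𝓝 r] fun _ => 0 := by
    filter_upwards [lt_mem_nhds hr] with s hs using hU.solves s hs
  have hderiv := hasDerivAt_radialQLS n ω p hU.contDiff hr.ne' (hU.pos r hr).ne'
  exact eq_neg_of_add_eq_zero_left
    (hderiv.unique ((hasDerivAt_const r 0).congr_of_eventuallyEq hzero))

lemma hasDerivAt_wronskian (hU : IsRadialGroundState n ω p U) (hV : ContDiff ℝ 2 V) {r : ℝ}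
    (hr : 0 < r) (hLV : radialLplus n ω p U V r = 0) :
    HasDerivAt (radialWronskian n U (deriv U) V)
      (r ^ n * (n / r ^ 2 * (1 + 2 * U r ^ 2)) * (deriv U r * V r)) r := by
  refine (hasDerivAt_radialWronskian n ω p (hU.contDiff.differentiable (by simp))
    hU.contDiff.deriv' hV hr.ne').congr_deriv ?_
  rw [hLV, hU.radialLplus_deriv hr]
  ring

lemma antitoneOn_wronskian (hU : IsRadialGroundState n ω p U) (hV : ContDiff ℝ 2 V)
    (hV_nonneg : ∀ r, 0 < r → 0 ≤ V r) (hLV : ∀ r, 0 < r → radialLplus n ω p U V r = 0) :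
    AntitoneOn (radialWronskian n U (deriv U) V) (Set.Ici 0) := by
  have hcont : Continuous (radialWronskian n U (deriv U) V) :=
    continuous_radialWronskian n hU.contDiff.continuous
      ((hU.contDiff.deriv' (n := 2)).of_le (by norm_num)) (hV.of_le (by norm_num))
  have hpos : ∀ r ∈ interior (Set.Ici (0 : ℝ)), 0 < r := fun r hr => by rwa [interior_Ici] at hr
  refine antitoneOn_of_hasDerivWithinAt_nonpos (convex_Ici 0) hcont.continuousOn
    (fun r hr => (hU.hasDerivAt_wronskian hV (hpos r hr) (hLV r (hpos r hr))).hasDerivWithinAt)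
    fun r hr_mem => ?_
  have hr := hpos r hr_mem
  have hsign : deriv U r * V r ≤ 0 := mul_nonpos_of_nonpos_of_nonneg
    (deriv_nonpos_of_antitoneOn_Ici hU.strictAntiOn.antitoneOn hr) (hV_nonneg r hr)
  exact mul_nonpos_of_nonneg_of_nonpos (by positivity) hsign

lemma frequently_abs_wronskian_lt (hU : IsRadialGroundState n ω p U)
    (hV : ∃ᶠ r in atTop, V r ^ 2 + deriv V r ^ 2 < 1) {ε : ℝ} (hε : 0 < ε) :
    ∃ᶠ r in atTop, |radialWronskian n U (deriv U) V r| < ε := by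
  have hcoeff : Tendsto (fun r => 1 + 2 * U r ^ 2) atTop (𝓝 1) := by
    have hU0 : Tendsto U atTop (𝓝 0) := by simpa using hU.decay 0 (by norm_num) 0
    simpa using ((hU0.pow 2).const_mul 2).const_add 1
  have hweight : ∀ k ≤ 2, Tendsto (fun r => (1 + 2 * U r ^ 2) * (r ^ n * deriv^[k] U r))
      atTop (𝓝 0) := fun k hk => by simpa using hcoeff.mul (hU.decay k hk n)
  refine (frequently_abs_mul_sub_mul_lt (hweight 2 le_rfl) (hweight 1 one_le_two) hV hε).mono
    fun r hr => ?_
  convert hr using 2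
  simp only [radialWronskian, Function.iterate_succ, Function.iterate_zero, Function.comp_apply,
    id_eq]
  ring

lemma eqOn_zero_of_nonneg (hU : IsRadialGroundState n ω p U) (hn : n ≠ 0) (hV : ContDiff ℝ 2 V)
    (hV_nonneg : ∀ r, 0 < r → 0 ≤ V r) (hLV : ∀ r, 0 < r → radialLplus n ω p U V r = 0)
    (hV_small : ∃ᶠ r in atTop, V r ^ 2 + deriv V r ^ 2 < 1) : Set.EqOn V 0 (Set.Ici 0) := by
  have hW : Set.EqOn (radialWronskian n U (deriv U) V) 0 (Set.Ici 0) :=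
    eqOn_zero_of_antitoneOn_of_frequently_abs_lt (hU.antitoneOn_wronskian hV hV_nonneg hLV)
      (by simp [radialWronskian, hn]) fun _ hε => hU.frequently_abs_wronskian_lt hV_small hε
  refine eqOn_zero_of_strictAntiOn_of_deriv_mul_eq_zero (hU.contDiff.differentiable (by simp))
    hU.strictAntiOn hV.continuous.continuousOn fun r hr => ?_
  have hW_nhds : radialWronskian n U (deriv U) V =ᶠ[𝓝 r] fun _ => 0 := by
    filter_upwards [lt_mem_nhds hr] with s hs using hW (Set.mem_Ici.2 hs.le)
  have hderiv := (hU.hasDerivAt_wronskian hV hr (hLV r hr)).unique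
    ((hasDerivAt_const r 0).congr_of_eventuallyEq hW_nhds)
  have : (n : ℝ) ≠ 0 := Nat.cast_ne_zero.2 hn
  exact (mul_eq_zero.1 hderiv).resolve_left (by positivity)

end IsRadialGroundState

lemma frequently_cobounded_lt_of_integrable {E : Type*} [NormedAddCommGroup E] [NormedSpace ℝ E]
    [FiniteDimensional ℝ E] [Nontrivial E] [MeasurableSpace E] [BorelSpace E]
    {μ : Measure E} [μ.IsAddHaarMeasure] {g : E → ℝ} (hg : Integrable g μ) {ε : ℝ} (hε : 0 < ε) :
    ∃ᶠ x in Bornology.cobounded E, g x < ε := by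
  intro hge
  have : ProperSpace E := FiniteDimensional.proper_real E
  have hbdd : Bornology.IsBounded {x | ε ≤ g x}ᶜ := by
    simpa only [not_lt] using Bornology.IsCobounded.compl hge
  have hfin : μ Set.univ < ⊤ := by
    rw [← Set.union_compl_self {x | ε ≤ g x}]
    exact (measure_union_le _ _).trans_lt
      (ENNReal.add_lt_top.2 ⟨hg.measure_ge_lt_top hε, hbdd.measure_lt_top⟩)
  exact hfin.ne (measure_univ_of_isAddLeftInvariant μ)

lemma frequently_rayProfile_sq_add_deriv_sq_lt {N : ℕ} {e : EuclideanSpace ℝ (Fin N)}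
    (he : ‖e‖ = 1) {v : EuclideanSpace ℝ (Fin N) → ℝ} (hv : ContDiff ℝ 1 v)
    (hrad : ∀ x y, ‖x‖ = ‖y‖ → v x = v y)
    (hint : Integrable fun x => v x ^ 2 + gradsq v x) {ε : ℝ} (hε : 0 < ε) :
    ∃ᶠ r in atTop, rayProfile e v r ^ 2 + deriv (rayProfile e v) r ^ 2 < ε := by
  have : Nontrivial (EuclideanSpace ℝ (Fin N)) :=
    ⟨e, 0, norm_ne_zero_iff.1 (he.symm ▸ one_ne_zero)⟩
  have hv_eq : (fun x => rayProfile e v ‖x‖) = v := funext (rayProfile_norm he hrad)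
  have henergy : ∀ x ≠ 0, rayProfile e v ‖x‖ ^ 2 + deriv (rayProfile e v) ‖x‖ ^ 2 =
      v x ^ 2 + gradsq v x := fun x hx => by
    rw [← gradsq_comp_norm hx ((contDiff_rayProfile e hv).differentiable (by simp) _), hv_eq,
      rayProfile_norm he hrad]
  refine tendsto_norm_cobounded_atTop.frequently
    (((frequently_cobounded_lt_of_integrable hint hε).and_eventually
      (Bornology.eventually_ne_cobounded 0)).mono fun x ⟨hlt, hx⟩ => ?_)
  rwa [henergy x hx]

namespace IsGroundState

variable {ω p : ℝ}

section Profile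

variable {N : ℕ} {u : EuclideanSpace ℝ (Fin N) → ℝ} {e : EuclideanSpace ℝ (Fin N)}

lemma eq_of_norm_eq (hu : IsGroundState N ω p u)
    (x y : EuclideanSpace ℝ (Fin N)) (hxy : ‖x‖ = ‖y‖) : u x = u y := by
  obtain ⟨U, -, -, hU⟩ := hu.radial
  rw [hU, hU, hxy]

lemma strictAntiOn_rayProfile (hu : IsGroundState N ω p u) (he : ‖e‖ = 1) :
    StrictAntiOn (rayProfile e u) (Set.Ici 0) := by
  obtain ⟨U, hU_anti, -, hU⟩ := hu.radial
  refine hU_anti.congr fun r hr => ?_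
  rw [rayProfile, hU, norm_smul_of_nonneg hr, he, mul_one]

lemma tendsto_pow_mul_iterate_deriv_rayProfile (hu : IsGroundState N ω p u) (he : ‖e‖ = 1)
    (k j : ℕ) :
    Tendsto (fun r => r ^ j * deriv^[k] (rayProfile e u) r) atTop (𝓝 0) := by
  obtain ⟨C, -, δ, hδ, hdecay⟩ := hu.decay k
  refine tendsto_pow_mul_of_abs_le_exp (C := C) hδ (fun r hr => ?_) j
  rw [← iteratedDeriv_eq_iterate, ← Real.norm_eq_abs]
  calc ‖iteratedDeriv k (rayProfile e u) r‖ ≤ ‖iteratedFDeriv ℝ k u (r • e)‖ := by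
        simpa [he] using norm_iteratedDeriv_rayProfile_le e
          (hu.smooth.of_le (by exact_mod_cast le_top)) r
    _ ≤ C * exp (-δ * ‖r • e‖) := hdecay _
    _ = C * exp (-δ * r) := by rw [norm_smul_of_nonneg hr, he, mul_one]

end Profile

variable {n : ℕ} {u v : EuclideanSpace ℝ (Fin (n + 1)) → ℝ}

lemma isRadialGroundState_rayProfile (hu : IsGroundState (n + 1) ω p u)
    {e : EuclideanSpace ℝ (Fin (n + 1))} (he : ‖e‖ = 1) :
    IsRadialGroundState n ω p (rayProfile e u) where
  contDiff := contDiff_rayProfile e (contDiff_infty.1 hu.smooth 3)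
  pos _ _ := hu.pos _
  strictAntiOn := hu.strictAntiOn_rayProfile he
  solves r hr := by
    obtain ⟨x, rfl⟩ := exists_norm_eq (EuclideanSpace ℝ (Fin (n + 1))) hr.le
    have hU : ContDiff ℝ 2 (rayProfile e u) :=
      contDiff_rayProfile e (contDiff_infty.1 hu.smooth 2)
    have h := qls_comp_norm hU ω p (norm_pos_iff.1 hr)
    simp only [rayProfile_norm he hu.eq_of_norm_eq] at h
    exact h.symm.trans (hu.solves x)
  decay k _ j := hu.tendsto_pow_mul_iterate_deriv_rayProfile he k j

lemma eq_zero_of_nonneg_of_Lplus_eq_zero (hu : IsGroundState (n + 1) ω p u) (hn : n ≠ 0)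
    (hv : ContDiff ℝ 2 v) (hrad : ∀ x y, ‖x‖ = ‖y‖ → v x = v y) (hv_nonneg : ∀ x, 0 ≤ v x)
    (hint : Integrable fun x => v x ^ 2 + gradsq v x) (hLv : ∀ x, Lplus ω p u v x = 0)
    (x : EuclideanSpace ℝ (Fin (n + 1))) : v x = 0 := by
  obtain ⟨e, he⟩ : ∃ e : EuclideanSpace ℝ (Fin (n + 1)), ‖e‖ = 1 := exists_norm_eq _ zero_le_one
  have hV : ContDiff ℝ 2 (rayProfile e v) := contDiff_rayProfile e hv
  have hU : IsRadialGroundState n ω p (rayProfile e u) := hu.isRadialGroundState_rayProfile he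
  have hLV : ∀ r, 0 < r → radialLplus n ω p (rayProfile e u) (rayProfile e v) r = 0 := by
    intro r hr
    obtain ⟨y, rfl⟩ := exists_norm_eq (EuclideanSpace ℝ (Fin (n + 1))) hr.le
    have h := Lplus_comp_norm (hU.contDiff.of_le (by norm_num)) hV ω p (norm_pos_iff.1 hr)
    simp only [rayProfile_norm he hu.eq_of_norm_eq, rayProfile_norm he hrad] at h
    exact h.symm.trans (hLv y)
  rw [← rayProfile_norm he hrad x]
  exact hU.eqOn_zero_of_nonneg hn hV (fun r _ => hv_nonneg _) hLV
    (frequently_rayProfile_sq_add_deriv_sq_lt he (hv.of_le (by norm_num)) hrad hint one_pos)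
    (norm_nonneg x)

end IsGroundState

lemma pd_neg {N : ℕ} {F : Type*} [NormedAddCommGroup F] [NormedSpace ℝ F] (i : Fin N)
    (f : EuclideanSpace ℝ (Fin N) → F) : pd i (fun y => -f y) = fun x => -pd i f x := by
  ext x
  simp [pd, fderiv_fun_neg]

lemma Lplus_neg {N : ℕ} (ω p : ℝ) (u v : EuclideanSpace ℝ (Fin N) → ℝ)
    (x : EuclideanSpace ℝ (Fin N)) : Lplus ω p u (fun y => -v y) x = -Lplus ω p u v x := by
  simp only [Lplus, lap, mul_neg, pd_neg, Finset.sum_neg_distrib]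
  ring

theorem stmt3_general {N : ℕ} (hN : 2 ≤ N) {ω p : ℝ} {u v : EuclideanSpace ℝ (Fin N) → ℝ}
    (hu : IsGroundState N ω p u) (hv : ContDiff ℝ 2 v)
    (hrad : ∀ x y, ‖x‖ = ‖y‖ → v x = v y) (hne : ∃ x, v x ≠ 0)
    (hint : Integrable fun x => v x ^ 2 + gradsq v x) (heq : ∀ x, Lplus ω p u v x = 0) :
    (∃ x, 0 < v x) ∧ ∃ y, v y < 0 := by
  obtain ⟨n, rfl⟩ : ∃ n, N = n + 1 := Nat.exists_eq_add_one.2 (by omega)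
  have hn : n ≠ 0 := by omega
  obtain ⟨x, hx⟩ := hne
  constructor
  · by_contra! hnonpos
    have hneg := hu.eq_zero_of_nonneg_of_Lplus_eq_zero hn hv.neg
      (fun y z hyz => congrArg Neg.neg (hrad y z hyz)) (fun y => neg_nonneg.2 (hnonpos y))
      (by simpa [gradsq, pd_neg] using hint) (fun y => by rw [Lplus_neg, heq, neg_zero]) x
    exact hx (neg_eq_zero.1 hneg)
  · by_contra! hnonneg
    exact hx (hu.eq_zero_of_nonneg_of_Lplus_eq_zero hn hv hrad hnonneg hint heq x)

/-- A nontrivial radial finite-energy solution of `L₊ v = 0` changes sign. -/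
theorem stmt3 (N : ℕ) (hN : 2 ≤ N) (ω p : ℝ) (hω : 0 < ω) (hp : 1 < p)
    (hpmax : 3 ≤ N → p < (3 * (N : ℝ) + 2) / ((N : ℝ) - 2))
    (u : EuclideanSpace ℝ (Fin N) → ℝ) (hu : IsGroundState N ω p u)
    (v : EuclideanSpace ℝ (Fin N) → ℝ) (hv : ContDiff ℝ (⊤ : ℕ∞) v)
    (hrad : ∀ x y, ‖x‖ = ‖y‖ → v x = v y)
    (hne : ∃ x, v x ≠ 0)
    (hint : Integrable (fun x => (v x) ^ 2 + gradsq v x))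
    (heq : ∀ x, Lplus ω p u v x = 0) :
    (∃ x, 0 < v x) ∧ (∃ y, v y < 0) := by
  exact stmt3_general hN hu (contDiff_infty.1 hv 2) hrad hne hint heq

end
end

section
/- Let N ≥ 2 be an integer, ω > 0, and 1 < p < p_max, let u be a ground-state profile of (QLS), and let λ < ω be a real number. Then there is no sequence (φ_n) of smooth functions ℝ^N → ℂ such that: each φ_n together with all its first- and second-order partial derivatives is square-integrable on ℝ^N; ∫_{ℝ^N}|φ_n|² dx = 1 for every n; ∫_{ℝ^N} φ_n \overline{g} dx → 0 as n → ∞ for every square-integrable g : ℝ^N → ℂ (weak L² convergence of φ_n to 0); and ∫_{ℝ^N} |L₊φ_n − λφ_n|² dx → 0 as n → ∞. (In particular, the continuous spectrum of L₊ is contained in [ω, ∞).) -/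
open MeasureTheory Real Filter Topology

noncomputable section

/-- The linearized operator `L₊` acting on complex-valued functions. -/
def LplusC {N : ℕ} (ω p : ℝ) (u : EuclideanSpace ℝ (Fin N) → ℝ)
    (η : EuclideanSpace ℝ (Fin N) → ℂ) (x : EuclideanSpace ℝ (Fin N)) : ℂ :=
  -lap η x - 2 * (u x : ℂ) * lap (fun y => (u y : ℂ) * η y) x + (ω : ℂ) * η x
    - ((lap (fun y => (u y) ^ 2) x + p * u x ^ (p - 1) : ℝ) : ℂ) * η x

/-!
Pairing `L₊φ - λφ` with `φ` and integrating by parts, the second-order terms `-Δφ` and `-2uΔ(uφ)`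
contribute `∫|∇φ|²` and `2∫|∇(uφ)|²`. With `V = Δ(u²) + p u^{p-1}` and `∫|φ|² = 1`, Cauchy–Schwarz
gives `∫|∇φ|² + (ω - λ) ≤ ∫V|φ|² + ‖L₊φ - λφ‖`. Along a singular sequence the gradients are
therefore eventually bounded in `L²`. A weakly null sequence with bounded gradients tends to `0` in
`L²` on sets of finite measure: up to an `L²` error of order `r`, each member is its average over
balls of radius `r`, and these averages tend to `0` pointwise and boundedly. Since `V` vanishes at
infinity, `∫V|φ_n|² → 0`, and the limit of the inequality reads `ω - λ ≤ 0`.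
-/

open scoped ENNReal NNReal

lemma exists_enorm_le_of_tendsto_cocompact {X F : Type*} [TopologicalSpace X]
    [NormedAddCommGroup F] {f : X → F} (hf : Continuous f)
    (hf0 : Tendsto f (cocompact X) (𝓝 0)) : ∃ M : ℝ≥0, ∀ x, ‖f x‖ₑ ≤ M := by
  obtain ⟨M, -, hM⟩ := (hf.isBounded_range_iff_isBigO.2
    (hf0.isBigO_one ℝ)).exists_pos_norm_le
  exact ⟨M.toNNReal, fun x => by
    rw [← ofReal_norm]; exact ENNReal.ofReal_le_ofReal (hM _ ⟨x, rfl⟩)⟩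

lemma memLp_top_of_tendsto_cocompact {X F : Type*} [TopologicalSpace X]
    [SecondCountableTopology X] [MeasurableSpace X] [OpensMeasurableSpace X]
    [NormedAddCommGroup F] {μ : Measure X} {f : X → F} (hf : Continuous f)
    (hf0 : Tendsto f (cocompact X) (𝓝 0)) : MemLp f ∞ μ := by
  obtain ⟨M, hM⟩ := exists_enorm_le_of_tendsto_cocompact hf hf0
  exact memLp_top_of_bound hf.aestronglyMeasurable M (ae_of_all _ fun x => enorm_le_coe.1 (hM x))

section AverageOverBalls

lemma enorm_integral_sq_le_lintegral_enorm_sq {α F : Type*} [MeasurableSpace α]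
    [NormedAddCommGroup F] [NormedSpace ℝ F] (ν : Measure α) [IsProbabilityMeasure ν] (f : α → F) :
    ‖∫ a, f a ∂ν‖ₑ ^ 2 ≤ ∫⁻ a, ‖f a‖ₑ ^ 2 ∂ν := by
  by_cases hf : AEStronglyMeasurable f ν
  · calc ‖∫ a, f a ∂ν‖ₑ ^ 2 ≤ eLpNorm f 1 ν ^ 2 := by
          rw [eLpNorm_one_eq_lintegral_enorm]
          gcongr
          exact enorm_integral_le_lintegral_enorm f
      _ ≤ eLpNorm f 2 ν ^ 2 := by
          gcongr
          exact eLpNorm_le_eLpNorm_of_exponent_le one_le_two hf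
      _ = ∫⁻ a, ‖f a‖ₑ ^ 2 ∂ν := by
          simpa using eLpNorm_nnreal_pow_eq_lintegral (μ := ν) (f := f) (p := 2) two_ne_zero
  · simp [integral_non_aestronglyMeasurable hf]

lemma enorm_sq_le_two_mul_add {F : Type*} [NormedAddCommGroup F] (a b : F) :
    ‖a‖ₑ ^ 2 ≤ 2 * ‖a - b‖ₑ ^ 2 + 2 * ‖b‖ₑ ^ 2 := by
  have htriangle : ‖a‖ₑ ≤ ‖a - b‖ₑ + ‖b‖ₑ := by simpa using enorm_add_le (a - b) b
  have hconvex := ENNReal.rpow_add_le_mul_rpow_add_rpow ‖a - b‖ₑ ‖b‖ₑ one_le_two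
  norm_num at hconvex
  calc ‖a‖ₑ ^ 2 ≤ (‖a - b‖ₑ + ‖b‖ₑ) ^ 2 := by gcongr
    _ ≤ 2 * ‖a - b‖ₑ ^ 2 + 2 * ‖b‖ₑ ^ 2 := by rwa [← mul_add]

variable {E F : Type*} [NormedAddCommGroup E] [NormedSpace ℝ E] [NormedAddCommGroup F]
  [NormedSpace ℝ F]

lemma integral_fderiv_segment [CompleteSpace F] {f : E → F} (hf : ContDiff ℝ 1 f) (x y : E) :
    ∫ t in Set.Ioc (0 : ℝ) 1, fderiv ℝ f (x + t • y) y = f (x + y) - f x := by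
  have hderiv (t : ℝ) : HasDerivAt (fun t : ℝ => f (x + t • y)) (fderiv ℝ f (x + t • y) y) t := by
    have hline : HasDerivAt (fun t : ℝ => x + t • y) y t := by
      simpa using ((hasDerivAt_id t).smul_const y).const_add x
    exact (hf.differentiable one_ne_zero _).hasFDerivAt.comp_hasDerivAt t hline
  have hcont : Continuous fun t : ℝ => fderiv ℝ f (x + t • y) y := by
    have := hf.continuous_fderiv one_ne_zero
    fun_prop
  rw [← intervalIntegral.integral_of_le zero_le_one,
    intervalIntegral.integral_eq_sub_of_hasDerivAt (fun t _ => hderiv t)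
      (hcont.intervalIntegrable _ _)]
  simp

lemma enorm_sub_translate_sq_le [CompleteSpace F] {f : E → F} (hf : ContDiff ℝ 1 f) (x y : E) :
    ‖f x - f (x + y)‖ₑ ^ 2 ≤
      ∫⁻ t in Set.Ioc (0 : ℝ) 1, ‖y‖ₑ ^ 2 * ‖fderiv ℝ f (x + t • y)‖ₑ ^ 2 := by
  have : IsProbabilityMeasure (volume.restrict (Set.Ioc (0 : ℝ) 1)) := ⟨by simp⟩
  calc ‖f x - f (x + y)‖ₑ ^ 2
      = ‖∫ t in Set.Ioc (0 : ℝ) 1, fderiv ℝ f (x + t • y) y‖ₑ ^ 2 := by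
        rw [integral_fderiv_segment hf, ← enorm_neg, neg_sub]
    _ ≤ ∫⁻ t in Set.Ioc (0 : ℝ) 1, ‖fderiv ℝ f (x + t • y) y‖ₑ ^ 2 :=
        enorm_integral_sq_le_lintegral_enorm_sq _ _
    _ ≤ ∫⁻ t in Set.Ioc (0 : ℝ) 1, ‖y‖ₑ ^ 2 * ‖fderiv ℝ f (x + t • y)‖ₑ ^ 2 := by
        gcongr with t
        rw [← mul_pow, mul_comm]
        gcongr
        exact ContinuousLinearMap.le_opENorm _ _

variable [MeasurableSpace E] {μ : Measure E}

variable (μ) in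
/-- The mean of `f` over the ball of radius `r` around `x`. It is written with the normalized
measure of the ball at the origin, so that the averaging measure does not depend on `x`. -/
def ballAverage (r : ℝ) (f : E → F) (x : E) : F :=
  ∫ y, f (x + y) ∂ProbabilityTheory.cond μ (Metric.ball 0 r)

variable [FiniteDimensional ℝ E]

lemma isProbabilityMeasure_cond_ball [μ.IsAddHaarMeasure] {r : ℝ} (hr : 0 < r) :
    IsProbabilityMeasure (ProbabilityTheory.cond μ (Metric.ball 0 r)) :=
  ProbabilityTheory.cond_isProbabilityMeasure_of_finite (Metric.measure_ball_pos μ 0 hr).ne'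
    measure_ball_lt_top.ne

variable [BorelSpace E]

lemma stronglyMeasurable_ballAverage {f : E → F} (hf : Continuous f) (r : ℝ) :
    StronglyMeasurable (ballAverage μ r f) := by
  have : Continuous fun z : E × E => f (z.1 + z.2) := by fun_prop
  exact this.stronglyMeasurable.integral_prod_right

variable [μ.IsAddHaarMeasure]

lemma lintegral_enorm_sub_translate_sq_le [CompleteSpace F] {f : E → F} (hf : ContDiff ℝ 1 f)
    (y : E) :
    ∫⁻ x, ‖f x - f (x + y)‖ₑ ^ 2 ∂μ ≤ ‖y‖ₑ ^ 2 * ∫⁻ x, ‖fderiv ℝ f x‖ₑ ^ 2 ∂μ := by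
  have hcont : Continuous (fderiv ℝ f) := hf.continuous_fderiv one_ne_zero
  have hmeas : Measurable fun z : E × ℝ => ‖y‖ₑ ^ 2 * ‖fderiv ℝ f (z.1 + z.2 • y)‖ₑ ^ 2 := by
    have : Continuous fun z : E × ℝ => fderiv ℝ f (z.1 + z.2 • y) := by fun_prop
    exact (this.enorm.measurable.pow_const 2).const_mul _
  calc ∫⁻ x, ‖f x - f (x + y)‖ₑ ^ 2 ∂μ
      ≤ ∫⁻ x, (∫⁻ t in Set.Ioc (0 : ℝ) 1, ‖y‖ₑ ^ 2 * ‖fderiv ℝ f (x + t • y)‖ₑ ^ 2) ∂μ :=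
        lintegral_mono fun x => enorm_sub_translate_sq_le hf x y
    _ = ∫⁻ t in Set.Ioc (0 : ℝ) 1, ∫⁻ x, ‖y‖ₑ ^ 2 * ‖fderiv ℝ f (x + t • y)‖ₑ ^ 2 ∂μ :=
        lintegral_lintegral_swap hmeas.aemeasurable
    _ = ∫⁻ _ in Set.Ioc (0 : ℝ) 1, ‖y‖ₑ ^ 2 * ∫⁻ x, ‖fderiv ℝ f x‖ₑ ^ 2 ∂μ := by
        congr 1 with t
        rw [lintegral_add_right_eq_self (fun x => ‖y‖ₑ ^ 2 * ‖fderiv ℝ f x‖ₑ ^ 2) (t • y),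
          lintegral_const_mul _ (hcont.enorm.measurable.pow_const 2)]
    _ = ‖y‖ₑ ^ 2 * ∫⁻ x, ‖fderiv ℝ f x‖ₑ ^ 2 ∂μ := by simp

lemma sub_ballAverage_eq_integral [CompleteSpace F] {f : E → F} (hf : Continuous f) {r : ℝ}
    (hr : 0 < r) (x : E) :
    f x - ballAverage μ r f x
      = ∫ y, (f x - f (x + y)) ∂ProbabilityTheory.cond μ (Metric.ball 0 r) := by
  have := isProbabilityMeasure_cond_ball (μ := μ) hr
  have hcont : Continuous fun y => f (x + y) := by fun_prop
  have hint : Integrable (fun y => f (x + y)) (ProbabilityTheory.cond μ (Metric.ball 0 r)) :=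
    ((hcont.continuousOn.integrableOn_compact (isCompact_closedBall 0 r)).mono_set
      Metric.ball_subset_closedBall).smul_measure
        (ENNReal.inv_ne_top.2 (Metric.measure_ball_pos μ 0 hr).ne')
  rw [integral_sub (integrable_const _) hint, integral_const, probReal_univ, one_smul, ballAverage]

lemma lintegral_enorm_sub_ballAverage_sq_le [CompleteSpace F] {f : E → F} (hf : ContDiff ℝ 1 f)
    {r : ℝ} (hr : 0 < r) :
    ∫⁻ x, ‖f x - ballAverage μ r f x‖ₑ ^ 2 ∂μ ≤
      ENNReal.ofReal r ^ 2 * ∫⁻ x, ‖fderiv ℝ f x‖ₑ ^ 2 ∂μ := by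
  set ν := ProbabilityTheory.cond μ (Metric.ball 0 r)
  have : IsProbabilityMeasure ν := isProbabilityMeasure_cond_ball hr
  have hcont := hf.continuous
  have hmeas : Measurable fun z : E × E => ‖f z.1 - f (z.1 + z.2)‖ₑ ^ 2 := by
    have : Continuous fun z : E × E => f z.1 - f (z.1 + z.2) := by fun_prop
    exact this.enorm.measurable.pow_const 2
  have hball : ∀ᵐ y ∂ν, y ∈ Metric.ball 0 r := ProbabilityTheory.ae_cond_mem measurableSet_ball
  calc ∫⁻ x, ‖f x - ballAverage μ r f x‖ₑ ^ 2 ∂μ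
      ≤ ∫⁻ x, ∫⁻ y, ‖f x - f (x + y)‖ₑ ^ 2 ∂ν ∂μ := by
        gcongr with x
        rw [sub_ballAverage_eq_integral hcont hr]
        exact enorm_integral_sq_le_lintegral_enorm_sq ν _
    _ = ∫⁻ y, ∫⁻ x, ‖f x - f (x + y)‖ₑ ^ 2 ∂μ ∂ν := lintegral_lintegral_swap hmeas.aemeasurable
    _ ≤ ∫⁻ _, ENNReal.ofReal r ^ 2 * ∫⁻ x, ‖fderiv ℝ f x‖ₑ ^ 2 ∂μ ∂ν := by
        refine lintegral_mono_ae (hball.mono fun y hy => ?_)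
        refine (lintegral_enorm_sub_translate_sq_le hf y).trans ?_
        rw [← ofReal_norm]
        gcongr
        exact (mem_ball_zero_iff.1 hy).le
    _ = ENNReal.ofReal r ^ 2 * ∫⁻ x, ‖fderiv ℝ f x‖ₑ ^ 2 ∂μ := by simp

lemma setLIntegral_enorm_sq_le_add_ballAverage [CompleteSpace F] {f : E → F}
    (hf : ContDiff ℝ 1 f) {r : ℝ} (hr : 0 < r) (s : Set E) :
    ∫⁻ x in s, ‖f x‖ₑ ^ 2 ∂μ ≤ 2 * (ENNReal.ofReal r ^ 2 * ∫⁻ x, ‖fderiv ℝ f x‖ₑ ^ 2 ∂μ)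
      + 2 * ∫⁻ x in s, ‖ballAverage μ r f x‖ₑ ^ 2 ∂μ := by
  have hmeas := stronglyMeasurable_ballAverage (μ := μ) hf.continuous r
  calc ∫⁻ x in s, ‖f x‖ₑ ^ 2 ∂μ
      ≤ ∫⁻ x in s, (2 * ‖f x - ballAverage μ r f x‖ₑ ^ 2 + 2 * ‖ballAverage μ r f x‖ₑ ^ 2) ∂μ :=
        lintegral_mono fun x => enorm_sq_le_two_mul_add _ _
    _ = 2 * ∫⁻ x in s, ‖f x - ballAverage μ r f x‖ₑ ^ 2 ∂μ
          + 2 * ∫⁻ x in s, ‖ballAverage μ r f x‖ₑ ^ 2 ∂μ := by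
        rw [lintegral_add_right _ ((hmeas.enorm.pow_const 2).const_mul 2),
          lintegral_const_mul' _ _ ENNReal.ofNat_ne_top,
          lintegral_const_mul' _ _ ENNReal.ofNat_ne_top]
    _ ≤ 2 * (ENNReal.ofReal r ^ 2 * ∫⁻ x, ‖fderiv ℝ f x‖ₑ ^ 2 ∂μ)
          + 2 * ∫⁻ x in s, ‖ballAverage μ r f x‖ₑ ^ 2 ∂μ := by
        gcongr
        exact (setLIntegral_le_lintegral _ _).trans (lintegral_enorm_sub_ballAverage_sq_le hf hr)

lemma enorm_ballAverage_sq_le (f : E → F) {r : ℝ} (hr : 0 < r) (x : E) :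
    ‖ballAverage μ r f x‖ₑ ^ 2 ≤ (μ (Metric.ball 0 r))⁻¹ * ∫⁻ y, ‖f y‖ₑ ^ 2 ∂μ := by
  have := isProbabilityMeasure_cond_ball (μ := μ) hr
  calc ‖ballAverage μ r f x‖ₑ ^ 2
      ≤ ∫⁻ y, ‖f (x + y)‖ₑ ^ 2 ∂ProbabilityTheory.cond μ (Metric.ball 0 r) :=
        enorm_integral_sq_le_lintegral_enorm_sq _ _
    _ = (μ (Metric.ball 0 r))⁻¹ * ∫⁻ y in Metric.ball 0 r, ‖f (x + y)‖ₑ ^ 2 ∂μ := by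
        rw [ProbabilityTheory.cond, lintegral_smul_measure, smul_eq_mul]
    _ ≤ (μ (Metric.ball 0 r))⁻¹ * ∫⁻ y, ‖f (x + y)‖ₑ ^ 2 ∂μ := by
        gcongr
        exact Measure.restrict_le_self
    _ = (μ (Metric.ball 0 r))⁻¹ * ∫⁻ y, ‖f y‖ₑ ^ 2 ∂μ := by
        rw [lintegral_add_left_eq_self (fun y => ‖f y‖ₑ ^ 2) x]

end AverageOverBalls

section LocalCompactness

variable {E 𝕜 : Type*} [NormedAddCommGroup E] [NormedSpace ℝ E] [FiniteDimensional ℝ E]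
  [MeasurableSpace E] [BorelSpace E] {μ : Measure E} [μ.IsAddHaarMeasure] [RCLike 𝕜]
  {φ : ℕ → E → 𝕜}

variable (μ φ) in
/-- Weak convergence to `0` in `L²(μ)`, tested against all square-integrable functions. -/
def WeaklyNull : Prop :=
  ∀ g : E → 𝕜, MemLp g 2 μ →
    Tendsto (fun n => ∫ x, φ n x * (starRingEnd 𝕜) (g x) ∂μ) atTop (𝓝 0)

lemma WeaklyNull.tendsto_ballAverage (hφ : WeaklyNull μ φ) (r : ℝ) (x : E) :
    Tendsto (fun n => ballAverage μ r (φ n) x) atTop (𝓝 0) := by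
  have htest := (hφ _ (memLp_indicator_const (μ := μ) 2 (measurableSet_ball (x := x) (ε := r))
    (1 : 𝕜) (.inr measure_ball_lt_top.ne))).const_smul (μ (Metric.ball 0 r))⁻¹.toReal
  rw [smul_zero] at htest
  refine htest.congr fun n => ?_
  rw [ballAverage, ProbabilityTheory.cond, integral_smul_measure,
    ← integral_indicator measurableSet_ball,
    ← integral_add_left_eq_self (fun z => φ n z * (starRingEnd 𝕜) _) x]
  congr 2 with y
  by_cases hy : ‖y‖ < r <;> simp [Set.indicator, hy]

lemma tendsto_setLIntegral_enorm_ballAverage_sq (hcont : ∀ n, Continuous (φ n)) {C : ℝ≥0}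
    (hbound : ∀ n, ∫⁻ x, ‖φ n x‖ₑ ^ 2 ∂μ ≤ C) (hφ : WeaklyNull μ φ) {r : ℝ}
    (hr : 0 < r) {s : Set E} (hs : μ s ≠ ∞) :
    Tendsto (fun n => ∫⁻ x in s, ‖ballAverage μ r (φ n) x‖ₑ ^ 2 ∂μ) atTop (𝓝 0) := by
  have hball : (μ (Metric.ball 0 r))⁻¹ ≠ ∞ :=
    ENNReal.inv_ne_top.2 (Metric.measure_ball_pos μ 0 hr).ne'
  rw [← lintegral_zero (μ := μ.restrict s)]
  refine tendsto_lintegral_of_dominated_convergence (fun _ => (μ (Metric.ball 0 r))⁻¹ * C)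
    (fun n => (stronglyMeasurable_ballAverage (hcont n) r).enorm.pow_const 2)
    (fun n => ae_of_all _ fun x => ?_) ?_ (ae_of_all _ fun x => ?_)
  · exact (enorm_ballAverage_sq_le (φ n) hr x).trans (mul_le_mul_right (hbound n) _)
  · rw [setLIntegral_const]
    finiteness
  · simpa using ENNReal.Tendsto.pow (n := 2) (hφ.tendsto_ballAverage r x).enorm

lemma tendsto_setLIntegral_enorm_sq_of_weaklyNull (hdiff : ∀ n, ContDiff ℝ 1 (φ n)) {C D : ℝ≥0}
    (hbound : ∀ n, ∫⁻ x, ‖φ n x‖ₑ ^ 2 ∂μ ≤ C)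
    (hgrad : ∀ᶠ n in atTop, ∫⁻ x, ‖fderiv ℝ (φ n) x‖ₑ ^ 2 ∂μ ≤ D) (hφ : WeaklyNull μ φ)
    {s : Set E} (hs : μ s ≠ ∞) :
    Tendsto (fun n => ∫⁻ x in s, ‖φ n x‖ₑ ^ 2 ∂μ) atTop (𝓝 0) := by
  rw [ENNReal.tendsto_nhds_zero]
  intro η hη
  obtain ⟨r, hr, hrη⟩ : ∃ r : ℝ, 0 < r ∧ 2 * (ENNReal.ofReal r ^ 2 * D) ≤ η / 2 := by
    have hcont : Continuous fun r => 2 * (ENNReal.ofReal r ^ 2 * D) :=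
      (ENNReal.continuous_const_mul ENNReal.ofNat_ne_top).comp
        ((ENNReal.continuous_mul_const ENNReal.coe_ne_top).comp
          ((ENNReal.continuous_pow 2).comp ENNReal.continuous_ofReal))
    have hsmall : Tendsto (fun r => 2 * (ENNReal.ofReal r ^ 2 * D)) (𝓝[>] 0) (𝓝 0) := by
      simpa using (hcont.tendsto 0).mono_left nhdsWithin_le_nhds
    exact ((eventually_mem_nhdsWithin).and
      (hsmall.eventually_le_const (ENNReal.half_pos hη.ne'))).exists
  have haverage : Tendsto (fun n => 2 * ∫⁻ x in s, ‖ballAverage μ r (φ n) x‖ₑ ^ 2 ∂μ)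
      atTop (𝓝 0) := by
    simpa using ENNReal.Tendsto.const_mul (tendsto_setLIntegral_enorm_ballAverage_sq
      (fun n => (hdiff n).continuous) hbound hφ hr hs) (.inr ENNReal.ofNat_ne_top)
  filter_upwards [haverage.eventually_le_const (ENNReal.half_pos hη.ne'), hgrad] with n hn hgrad_n
  calc ∫⁻ x in s, ‖φ n x‖ₑ ^ 2 ∂μ
      ≤ 2 * (ENNReal.ofReal r ^ 2 * ∫⁻ x, ‖fderiv ℝ (φ n) x‖ₑ ^ 2 ∂μ)
          + 2 * ∫⁻ x in s, ‖ballAverage μ r (φ n) x‖ₑ ^ 2 ∂μ :=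
        setLIntegral_enorm_sq_le_add_ballAverage (hdiff n) hr s
    _ ≤ 2 * (ENNReal.ofReal r ^ 2 * D) + η / 2 := by gcongr
    _ ≤ η / 2 + η / 2 := by gcongr
    _ = η := ENNReal.add_halves η

lemma tendsto_lintegral_enorm_mul_enorm_sq_of_weaklyNull (hdiff : ∀ n, ContDiff ℝ 1 (φ n))
    {C D : ℝ≥0} (hbound : ∀ n, ∫⁻ x, ‖φ n x‖ₑ ^ 2 ∂μ ≤ C)
    (hgrad : ∀ᶠ n in atTop, ∫⁻ x, ‖fderiv ℝ (φ n) x‖ₑ ^ 2 ∂μ ≤ D) (hφ : WeaklyNull μ φ)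
    {V : E → ℝ} (hV : Continuous V) (hV0 : Tendsto V (cocompact E) (𝓝 0)) :
    Tendsto (fun n => ∫⁻ x, ‖V x‖ₑ * ‖φ n x‖ₑ ^ 2 ∂μ) atTop (𝓝 0) := by
  obtain ⟨M, hM⟩ := exists_enorm_le_of_tendsto_cocompact hV hV0
  rw [ENNReal.tendsto_nhds_zero]
  intro η hη
  obtain ⟨δ, hδ, hδη⟩ := ENNReal.exists_nnreal_pos_mul_lt (ENNReal.coe_ne_top (r := C))
    (ENNReal.half_pos hη.ne').ne'
  obtain ⟨K, hK, hKδ⟩ : ∃ K, IsCompact K ∧ ∀ x ∉ K, ‖V x‖ₑ ≤ δ := by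
    have hsmall : ∀ᶠ x in cocompact E, ‖V x‖ₑ ≤ δ := by
      refine Tendsto.eventually_le_const (v := 0) (by simpa using hδ) ?_
      simpa using hV0.enorm
    obtain ⟨K, hK, hKδ⟩ := mem_cocompact.1 hsmall
    exact ⟨K, hK, fun x hx => hKδ hx⟩
  have hlocal : Tendsto (fun n => M * ∫⁻ x in K, ‖φ n x‖ₑ ^ 2 ∂μ) atTop (𝓝 0) := by
    simpa using ENNReal.Tendsto.const_mul (tendsto_setLIntegral_enorm_sq_of_weaklyNull hdiff hbound
      hgrad hφ hK.measure_lt_top.ne) (.inr (ENNReal.coe_ne_top (r := M)))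
  filter_upwards [hlocal.eventually_le_const (ENNReal.half_pos hη.ne')] with n hn
  calc ∫⁻ x, ‖V x‖ₑ * ‖φ n x‖ₑ ^ 2 ∂μ
      = ∫⁻ x in K, ‖V x‖ₑ * ‖φ n x‖ₑ ^ 2 ∂μ + ∫⁻ x in Kᶜ, ‖V x‖ₑ * ‖φ n x‖ₑ ^ 2 ∂μ :=
        (lintegral_add_compl _ hK.measurableSet).symm
    _ ≤ ∫⁻ x in K, M * ‖φ n x‖ₑ ^ 2 ∂μ + ∫⁻ x in Kᶜ, δ * ‖φ n x‖ₑ ^ 2 ∂μ := by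
        refine add_le_add (lintegral_mono fun x => ?_)
          (setLIntegral_mono' hK.measurableSet.compl fun x hx => ?_)
        · gcongr; exact hM x
        · gcongr; exact hKδ x hx
    _ = M * ∫⁻ x in K, ‖φ n x‖ₑ ^ 2 ∂μ + δ * ∫⁻ x in Kᶜ, ‖φ n x‖ₑ ^ 2 ∂μ := by
        rw [lintegral_const_mul' _ _ ENNReal.coe_ne_top,
          lintegral_const_mul' _ _ ENNReal.coe_ne_top]
    _ ≤ η / 2 + δ * C := by
        gcongr
        exact (setLIntegral_le_lintegral _ _).trans (hbound n)
    _ ≤ η / 2 + η / 2 := by gcongr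
    _ = η := ENNReal.add_halves η

lemma tendsto_integral_mul_norm_sq_of_weaklyNull (hdiff : ∀ n, ContDiff ℝ 1 (φ n))
    {C D : ℝ≥0} (hbound : ∀ n, ∫⁻ x, ‖φ n x‖ₑ ^ 2 ∂μ ≤ C)
    (hgrad : ∀ᶠ n in atTop, ∫⁻ x, ‖fderiv ℝ (φ n) x‖ₑ ^ 2 ∂μ ≤ D) (hφ : WeaklyNull μ φ)
    {V : E → ℝ} (hV : Continuous V) (hV0 : Tendsto V (cocompact E) (𝓝 0)) :
    Tendsto (fun n => ∫ x, V x * ‖φ n x‖ ^ 2 ∂μ) atTop (𝓝 0) := by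
  rw [tendsto_zero_iff_enorm_tendsto_zero]
  refine tendsto_of_tendsto_of_tendsto_of_le_of_le tendsto_const_nhds
    (tendsto_lintegral_enorm_mul_enorm_sq_of_weaklyNull hdiff hbound hgrad hφ hV hV0)
    (fun _ => zero_le) fun n => ?_
  refine (enorm_integral_le_lintegral_enorm _).trans_eq (lintegral_congr fun x => ?_)
  rw [enorm_mul, enorm_pow, enorm_norm]

end LocalCompactness

section PartialDerivatives

variable {N : ℕ} {F : Type*} [NormedAddCommGroup F] [NormedSpace ℝ F]
  {u : EuclideanSpace ℝ (Fin N) → ℝ} {f : EuclideanSpace ℝ (Fin N) → F}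

lemma contDiff_pd {m n : WithTop ℕ∞} (hf : ContDiff ℝ n f) (hmn : m + 1 ≤ n) (i : Fin N) :
    ContDiff ℝ m (pd i f) :=
  (hf.fderiv_right hmn).clm_apply contDiff_const

lemma continuous_pd (hf : ContDiff ℝ 1 f) (i : Fin N) : Continuous (pd i f) :=
  (contDiff_pd (m := 0) hf (by simp) i).continuous

lemma continuous_pd_pd (hf : ContDiff ℝ 2 f) (i j : Fin N) : Continuous (pd i (pd j f)) :=
  continuous_pd (contDiff_pd hf le_rfl j) i

lemma norm_pd_le (f : EuclideanSpace ℝ (Fin N) → F) (i : Fin N) (x : EuclideanSpace ℝ (Fin N)) :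
    ‖pd i f x‖ ≤ ‖iteratedFDeriv ℝ 1 f x‖ := by
  simpa [pd, norm_iteratedFDeriv_one] using
    (fderiv ℝ f x).le_opNorm (EuclideanSpace.single i (1 : ℝ))

lemma norm_pd_pd_le (hf : ContDiff ℝ 2 f) (i j : Fin N) (x : EuclideanSpace ℝ (Fin N)) :
    ‖pd i (pd j f) x‖ ≤ ‖iteratedFDeriv ℝ 2 f x‖ := by
  have hdiff : DifferentiableAt ℝ (fderiv ℝ f) x :=
    (hf.fderiv_right (m := 1) le_rfl).differentiable one_ne_zero x
  have heq : pd i (pd j f) x =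
      iteratedFDeriv ℝ 2 f x ![EuclideanSpace.single i 1, EuclideanSpace.single j 1] := by
    rw [iteratedFDeriv_two_apply, pd, show pd j f = fun y => fderiv ℝ f y _ from rfl,
      fderiv_clm_apply hdiff (differentiableAt_const _)]
    simp
  rw [heq]
  refine (ContinuousMultilinearMap.le_opNorm _ _).trans ?_
  simp [Fin.prod_univ_two]

lemma pd_smul {x : EuclideanSpace ℝ (Fin N)} (hu : DifferentiableAt ℝ u x)
    (hf : DifferentiableAt ℝ f x) (i : Fin N) :
    pd i (fun y => u y • f y) x = u x • pd i f x + pd i u x • f x := by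
  simp [pd, fderiv_fun_smul hu hf]

lemma pd_pd_smul (hu : ContDiff ℝ 2 u) (hf : ContDiff ℝ 2 f) (i j : Fin N)
    (x : EuclideanSpace ℝ (Fin N)) :
    pd i (pd j fun y => u y • f y) x =
      u x • pd i (pd j f) x + pd i u x • pd j f x
        + (pd j u x • pd i f x + pd i (pd j u) x • f x) := by
  have hu1 : Differentiable ℝ u := hu.differentiable two_ne_zero
  have hf1 : Differentiable ℝ f := hf.differentiable two_ne_zero
  have hu2 : Differentiable ℝ (pd j u) := (contDiff_pd hu le_rfl j).differentiable one_ne_zero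
  have hf2 : Differentiable ℝ (pd j f) := (contDiff_pd hf le_rfl j).differentiable one_ne_zero
  have hfirst : pd j (fun y => u y • f y) = (fun y => u y • pd j f y) + fun y => pd j u y • f y :=
    funext fun y => pd_smul (hu1 y) (hf1 y) j
  rw [hfirst, pd, fderiv_add ((hu1 x).fun_smul (hf2 x)) ((hu2 x).fun_smul (hf1 x))]
  exact congrArg₂ (· + ·) (pd_smul (hu1 x) (hf2 x) i) (pd_smul (hu2 x) (hf1 x) i)

lemma lap_sq (hu : ContDiff ℝ 2 u) (x : EuclideanSpace ℝ (Fin N)) :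
    lap (fun y => u y ^ 2) x = ∑ i, (2 * (u x * pd i (pd i u) x) + 2 * (pd i u x * pd i u x)) := by
  simp only [sq, lap]
  refine Finset.sum_congr rfl fun i _ => (pd_pd_smul hu hu i i x).trans ?_
  simp only [smul_eq_mul]
  ring

lemma opNorm_sq_le_sum_norm_sq (T : EuclideanSpace ℝ (Fin N) →L[ℝ] F) :
    ‖T‖ ^ 2 ≤ ∑ i, ‖T (EuclideanSpace.single i 1)‖ ^ 2 := by
  rw [← Real.le_sqrt (norm_nonneg _) (by positivity)]
  refine T.opNorm_le_bound (Real.sqrt_nonneg _) fun y => ?_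
  calc ‖T y‖ = ‖∑ i, y i • T (EuclideanSpace.single i 1)‖ := by
        conv_lhs => rw [← (EuclideanSpace.basisFun (Fin N) ℝ).sum_repr y]
        simp
    _ ≤ ∑ i, ‖T (EuclideanSpace.single i 1)‖ * ‖y i‖ := by
        simpa only [norm_smul, mul_comm] using
          norm_sum_le Finset.univ fun i => y i • T (EuclideanSpace.single i 1)
    _ ≤ √(∑ i, ‖T (EuclideanSpace.single i 1)‖ ^ 2) * √(∑ i, ‖y i‖ ^ 2) :=
        Real.sum_mul_le_sqrt_mul_sqrt _ _ _
    _ = √(∑ i, ‖T (EuclideanSpace.single i 1)‖ ^ 2) * ‖y‖ := by rw [EuclideanSpace.norm_eq]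

end PartialDerivatives

section Sobolev

variable {N : ℕ} {F : Type*} [NormedAddCommGroup F] [NormedSpace ℝ F] {q : ℝ≥0∞}
  {u : EuclideanSpace ℝ (Fin N) → ℝ} {f : EuclideanSpace ℝ (Fin N) → F}

/-- Twice continuously differentiable functions in the Sobolev space `W^{2,q}(ℝ^N)`, so that the
derivatives are classical ones. -/
structure MemSobolevTwo (q : ℝ≥0∞) (f : EuclideanSpace ℝ (Fin N) → F) : Prop where
  contDiff : ContDiff ℝ 2 f
  memLp : MemLp f q
  memLp_pd : ∀ i, MemLp (pd i f) q
  memLp_pd_pd : ∀ i j, MemLp (pd i (pd j f)) q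

lemma memSobolevTwo_of_iteratedFDeriv (hf : ContDiff ℝ 2 f)
    (hmem : ∀ k ≤ 2, MemLp (iteratedFDeriv ℝ k f) q) : MemSobolevTwo q f where
  contDiff := hf
  memLp := (hmem 0 zero_le_two).mono hf.continuous.aestronglyMeasurable
    (ae_of_all _ fun x => by simp)
  memLp_pd i := (hmem 1 one_le_two).mono
    (continuous_pd (hf.of_le one_le_two) i).aestronglyMeasurable
    (ae_of_all _ fun x => norm_pd_le f i x)
  memLp_pd_pd i j := (hmem 2 le_rfl).mono
    (continuous_pd_pd hf i j).aestronglyMeasurable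
    (ae_of_all _ fun x => norm_pd_pd_le hf i j x)

lemma memSobolevTwo_of_integrable_norm_iteratedFDeriv_sq (hf : ContDiff ℝ 2 f)
    (hint : ∀ k ≤ 2, Integrable fun x => ‖iteratedFDeriv ℝ k f x‖ ^ 2) : MemSobolevTwo 2 f := by
  refine memSobolevTwo_of_iteratedFDeriv hf fun k hk => ?_
  have hcont : Continuous (iteratedFDeriv ℝ k f) :=
    hf.continuous_iteratedFDeriv (by exact_mod_cast hk)
  exact (memLp_two_iff_integrable_sq_norm hcont.aestronglyMeasurable).2 (hint k hk)

namespace MemSobolevTwo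

lemma memLp_lap (hf : MemSobolevTwo q f) : MemLp (lap f) q :=
  memLp_finsetSum _ fun i _ => hf.memLp_pd_pd i i

lemma smul (hu : MemSobolevTwo ∞ u) (hf : MemSobolevTwo q f) :
    MemSobolevTwo q fun x => u x • f x where
  contDiff := hu.contDiff.smul hf.contDiff
  memLp := hf.memLp.smul hu.memLp
  memLp_pd i := by
    have hpd := funext fun x => pd_smul (hu.contDiff.differentiable two_ne_zero x)
      (hf.contDiff.differentiable two_ne_zero x) i
    rw [hpd]
    exact ((hf.memLp_pd i).smul hu.memLp).add (hf.memLp.smul (hu.memLp_pd i))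
  memLp_pd_pd i j := by
    have hpd := funext fun x => pd_pd_smul hu.contDiff hf.contDiff i j x
    rw [hpd]
    exact (((hf.memLp_pd_pd i j).smul hu.memLp).add ((hf.memLp_pd j).smul (hu.memLp_pd i))).add
      (((hf.memLp_pd i).smul (hu.memLp_pd j)).add (hf.memLp.smul (hu.memLp_pd_pd i j)))

end MemSobolevTwo

end Sobolev

section Green

variable {N : ℕ} {F : Type*} [NormedAddCommGroup F] [InnerProductSpace ℝ F]
  {f : EuclideanSpace ℝ (Fin N) → F}

lemma integrable_inner_of_memLp_two {α : Type*} [MeasurableSpace α] {μ : Measure α} {g h : α → F}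
    (hg : MemLp g 2 μ) (hh : MemLp h 2 μ) : Integrable (fun x => inner ℝ (g x) (h x)) μ :=
  memLp_one_iff_integrable.1 ((innerSL ℝ).memLp_of_bilin 1 hg hh)

lemma integrable_mul_norm_sq {α : Type*} [MeasurableSpace α] {μ : Measure α} {V : α → ℝ} {g : α → F}
    (hV : MemLp V ∞ μ) (hg : MemLp g 2 μ) : Integrable (fun x => V x * ‖g x‖ ^ 2) μ := by
  simpa only [Pi.smul_apply', inner_smul_right, real_inner_self_eq_norm_sq] using
    integrable_inner_of_memLp_two hg (hg.smul hV)

lemma integral_inner_le_sqrt_mul_sqrt {α : Type*} [MeasurableSpace α] {μ : Measure α} {g h : α → F}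
    (hg : MemLp g 2 μ) (hh : MemLp h 2 μ) :
    ∫ x, inner ℝ (g x) (h x) ∂μ ≤ √(∫ x, ‖g x‖ ^ 2 ∂μ) * √(∫ x, ‖h x‖ ^ 2 ∂μ) := by
  have hholder := integral_mul_le_Lp_mul_Lq_of_nonneg (μ := μ) Real.HolderConjugate.two_two
    (ae_of_all _ fun x => norm_nonneg (g x)) (ae_of_all _ fun x => norm_nonneg (h x))
    (by simpa using hg.norm) (by simpa using hh.norm)
  calc ∫ x, inner ℝ (g x) (h x) ∂μ ≤ ∫ x, ‖g x‖ * ‖h x‖ ∂μ :=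
        integral_mono (integrable_inner_of_memLp_two hg hh) (hg.norm.integrable_mul hh.norm)
          fun x => real_inner_le_norm _ _
    _ ≤ √(∫ x, ‖g x‖ ^ 2 ∂μ) * √(∫ x, ‖h x‖ ^ 2 ∂μ) := by
        simpa [Real.sqrt_eq_rpow] using hholder

/-- The Dirichlet energy `∫ |∇f|²`. -/
def dirichletEnergy (f : EuclideanSpace ℝ (Fin N) → F) : ℝ :=
  ∑ i, ∫ x, ‖pd i f x‖ ^ 2

lemma dirichletEnergy_nonneg (f : EuclideanSpace ℝ (Fin N) → F) : 0 ≤ dirichletEnergy f :=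
  Finset.sum_nonneg fun _ _ => integral_nonneg fun _ => sq_nonneg _

lemma lintegral_enorm_fderiv_sq_le_dirichletEnergy (hf : ∀ i, MemLp (pd i f) 2) :
    ∫⁻ x, ‖fderiv ℝ f x‖ₑ ^ 2 ≤ ENNReal.ofReal (dirichletEnergy f) := by
  have hint (i : Fin N) : Integrable fun x => ‖pd i f x‖ ^ 2 :=
    (memLp_two_iff_integrable_sq_norm (hf i).1).1 (hf i)
  rw [dirichletEnergy, ← integral_finsetSum _ fun i _ => hint i,
    ofReal_integral_eq_lintegral_ofReal (integrable_finsetSum _ fun i _ => hint i)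
      (ae_of_all _ fun x => by positivity)]
  refine lintegral_mono fun x => ?_
  rw [← ofReal_norm, ← ENNReal.ofReal_pow (norm_nonneg _)]
  exact ENNReal.ofReal_le_ofReal (opNorm_sq_le_sum_norm_sq _)

namespace MemSobolevTwo

lemma integral_inner_pd_pd (hf : MemSobolevTwo 2 f) (i : Fin N) :
    ∫ x, inner ℝ (f x) (pd i (pd i f) x) = -∫ x, ‖pd i f x‖ ^ 2 := by
  have hparts := integral_bilinear_fderiv_right_eq_neg_left_of_integrable (B := innerSL ℝ)
    (integrable_inner_of_memLp_two (hf.memLp_pd i) (hf.memLp_pd i))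
    (integrable_inner_of_memLp_two hf.memLp (hf.memLp_pd_pd i i))
    (integrable_inner_of_memLp_two hf.memLp (hf.memLp_pd i))
    (fun x _ => hf.contDiff.differentiable two_ne_zero x)
    (fun x _ => (contDiff_pd hf.contDiff le_rfl i).differentiable one_ne_zero x)
  refine hparts.trans (congrArg Neg.neg (integral_congr_ae (ae_of_all _ fun x => ?_)))
  exact real_inner_self_eq_norm_sq (pd i f x)

lemma integral_inner_lap (hf : MemSobolevTwo 2 f) :
    ∫ x, inner ℝ (f x) (lap f x) = -dirichletEnergy f := by
  simp only [lap, inner_sum]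
  rw [integral_finsetSum _ fun i _ => integrable_inner_of_memLp_two hf.memLp (hf.memLp_pd_pd i i),
    dirichletEnergy, ← Finset.sum_neg_distrib]
  exact Finset.sum_congr rfl fun i _ => hf.integral_inner_pd_pd i

end MemSobolevTwo

end Green

section QuasilinearOperator

variable {N : ℕ} {F : Type*} [NormedAddCommGroup F] [InnerProductSpace ℝ F] {ω : ℝ}
  {u V : EuclideanSpace ℝ (Fin N) → ℝ} {f : EuclideanSpace ℝ (Fin N) → F}

/-- The operator `f ↦ -Δf - 2uΔ(uf) + ωf - Vf`, of which `L₊` is the case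
`V = Δ(u²) + p u^{p-1}`. -/
def quasilinearOp (ω : ℝ) (u V : EuclideanSpace ℝ (Fin N) → ℝ) (f : EuclideanSpace ℝ (Fin N) → F)
    (x : EuclideanSpace ℝ (Fin N)) : F :=
  -lap f x - (2 * u x) • lap (fun y => u y • f y) x + ω • f x - V x • f x

lemma memLp_quasilinearOp {q : ℝ≥0∞} (hu : MemSobolevTwo ∞ u) (hV : MemLp V ∞)
    (hf : MemSobolevTwo q f) : MemLp (quasilinearOp ω u V f) q :=
  (((hf.memLp_lap.neg).sub ((hu.smul hf).memLp_lap.smul (hu.memLp.const_mul 2))).add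
    (hf.memLp.const_smul ω)).sub (hf.memLp.smul hV)

lemma inner_quasilinearOp (x : EuclideanSpace ℝ (Fin N)) :
    inner ℝ (f x) (quasilinearOp ω u V f x) =
      -inner ℝ (f x) (lap f x) - 2 * inner ℝ (u x • f x) (lap (fun y => u y • f y) x)
        + ω * ‖f x‖ ^ 2 - V x * ‖f x‖ ^ 2 := by
  simp only [quasilinearOp, inner_sub_right, inner_add_right, inner_neg_right, inner_smul_right,
    real_inner_smul_left, real_inner_self_eq_norm_sq]
  ring

lemma integral_inner_quasilinearOp (hu : MemSobolevTwo ∞ u) (hV : MemLp V ∞)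
    (hf : MemSobolevTwo 2 f) :
    ∫ x, inner ℝ (f x) (quasilinearOp ω u V f x) =
      dirichletEnergy f + 2 * dirichletEnergy (fun x => u x • f x) + ω * (∫ x, ‖f x‖ ^ 2)
        - ∫ x, V x * ‖f x‖ ^ 2 := by
  have huf := hu.smul hf
  have hfl := integrable_inner_of_memLp_two hf.memLp hf.memLp_lap
  have hufl := (integrable_inner_of_memLp_two huf.memLp huf.memLp_lap).const_mul 2
  have hff := ((memLp_two_iff_integrable_sq_norm hf.memLp.1).1 hf.memLp).const_mul ω
  simp only [inner_quasilinearOp]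
  rw [integral_sub ((hfl.fun_neg.sub' hufl).fun_add hff) (integrable_mul_norm_sq hV hf.memLp),
    integral_add (hfl.fun_neg.sub' hufl) hff, integral_sub hfl.fun_neg hufl, integral_neg,
    integral_const_mul, integral_const_mul, hf.integral_inner_lap, huf.integral_inner_lap]
  ring

lemma quasilinearOp_sub_smul (lam : ℝ) (x : EuclideanSpace ℝ (Fin N)) :
    quasilinearOp ω u V f x - lam • f x = quasilinearOp (ω - lam) u V f x := by
  simp only [quasilinearOp, sub_smul]
  abel

lemma dirichletEnergy_add_le (hu : MemSobolevTwo ∞ u) (hV : MemLp V ∞) (hf : MemSobolevTwo 2 f) :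
    dirichletEnergy f + ω * ∫ x, ‖f x‖ ^ 2 ≤
      (∫ x, V x * ‖f x‖ ^ 2) + √(∫ x, ‖f x‖ ^ 2) * √(∫ x, ‖quasilinearOp ω u V f x‖ ^ 2) := by
  have hcauchy := integral_inner_le_sqrt_mul_sqrt hf.memLp (memLp_quasilinearOp (ω := ω) hu hV hf)
  rw [integral_inner_quasilinearOp hu hV hf] at hcauchy
  linarith [dirichletEnergy_nonneg fun x => u x • f x]

end QuasilinearOperator

section WeylSequences

variable {N : ℕ} {ω lam : ℝ} {u V : EuclideanSpace ℝ (Fin N) → ℝ}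
  {φ : ℕ → EuclideanSpace ℝ (Fin N) → ℂ}

/-- Singular Weyl sequences of the operator `A` at `lam`: normalized, weakly null approximate
eigenfunctions in `W^{2,2}`. Their nonexistence keeps `lam` out of the essential spectrum. -/
structure IsWeylSequence
    (A : (EuclideanSpace ℝ (Fin N) → ℂ) → EuclideanSpace ℝ (Fin N) → ℂ) (lam : ℝ)
    (φ : ℕ → EuclideanSpace ℝ (Fin N) → ℂ) : Prop where
  memSobolevTwo : ∀ n, MemSobolevTwo 2 (φ n)
  integral_norm_sq : ∀ n, ∫ x, ‖φ n x‖ ^ 2 = 1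
  weaklyNull : WeaklyNull volume φ
  tendsto_residual : Tendsto (fun n => ∫ x, ‖A (φ n) x - lam • φ n x‖ ^ 2) atTop (𝓝 0)

namespace IsWeylSequence

lemma lintegral_enorm_sq
    {A : (EuclideanSpace ℝ (Fin N) → ℂ) → EuclideanSpace ℝ (Fin N) → ℂ}
    (h : IsWeylSequence A lam φ) (n : ℕ) : ∫⁻ x, ‖φ n x‖ₑ ^ 2 = 1 := by
  have hmem := (h.memSobolevTwo n).memLp
  have hint := ofReal_integral_eq_lintegral_ofReal
    ((memLp_two_iff_integrable_sq_norm hmem.1).1 hmem) (ae_of_all _ fun x => sq_nonneg ‖φ n x‖)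
  simpa only [h.integral_norm_sq, ENNReal.ofReal_one, ENNReal.ofReal_pow (norm_nonneg _),
    ofReal_norm] using hint.symm

lemma dirichletEnergy_add_le (h : IsWeylSequence (quasilinearOp ω u V) lam φ)
    (hu : MemSobolevTwo ∞ u) (hV : MemLp V ∞) (n : ℕ) :
    dirichletEnergy (φ n) + (ω - lam) ≤
      (∫ x, V x * ‖φ n x‖ ^ 2) + √(∫ x, ‖quasilinearOp ω u V (φ n) x - lam • φ n x‖ ^ 2) := by
  simpa only [quasilinearOp_sub_smul, h.integral_norm_sq, mul_one, Real.sqrt_one, one_mul] using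
    _root_.dirichletEnergy_add_le (ω := ω - lam) hu hV (h.memSobolevTwo n)

lemma tendsto_sqrt_residual
    {A : (EuclideanSpace ℝ (Fin N) → ℂ) → EuclideanSpace ℝ (Fin N) → ℂ}
    (h : IsWeylSequence A lam φ) :
    Tendsto (fun n => √(∫ x, ‖A (φ n) x - lam • φ n x‖ ^ 2)) atTop (𝓝 0) := by
  simpa using h.tendsto_residual.sqrt

lemma integral_mul_norm_sq_le
    {A : (EuclideanSpace ℝ (Fin N) → ℂ) → EuclideanSpace ℝ (Fin N) → ℂ}
    (h : IsWeylSequence A lam φ) (hV : MemLp V ∞) {M : ℝ} (hM : ∀ x, V x ≤ M) (n : ℕ) :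
    ∫ x, V x * ‖φ n x‖ ^ 2 ≤ M := by
  have hmem := (h.memSobolevTwo n).memLp
  have hint := (memLp_two_iff_integrable_sq_norm hmem.1).1 hmem
  calc ∫ x, V x * ‖φ n x‖ ^ 2 ≤ ∫ x, M * ‖φ n x‖ ^ 2 :=
        integral_mono (integrable_mul_norm_sq hV hmem) (hint.const_mul M) fun x =>
          mul_le_mul_of_nonneg_right (hM x) (sq_nonneg _)
    _ = M := by rw [integral_const_mul, h.integral_norm_sq, mul_one]

lemma exists_eventually_lintegral_enorm_fderiv_sq_le
    (h : IsWeylSequence (quasilinearOp ω u V) lam φ) (hu : MemSobolevTwo ∞ u)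
    (hV : Continuous V) (hV0 : Tendsto V (cocompact _) (𝓝 0)) (hlam : lam < ω) :
    ∃ D : ℝ≥0, ∀ᶠ n in atTop, ∫⁻ x, ‖fderiv ℝ (φ n) x‖ₑ ^ 2 ≤ D := by
  obtain ⟨M, hM⟩ := exists_enorm_le_of_tendsto_cocompact hV hV0
  have hVM (x : EuclideanSpace ℝ (Fin N)) : V x ≤ M :=
    (Real.le_norm_self _).trans (enorm_le_coe.1 (hM x))
  have hVmem : MemLp V ∞ := memLp_top_of_tendsto_cocompact hV hV0
  refine ⟨(M + 1 : ℝ).toNNReal, ?_⟩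
  filter_upwards [h.tendsto_sqrt_residual.eventually_le_const one_pos] with n hn
  refine (lintegral_enorm_fderiv_sq_le_dirichletEnergy (h.memSobolevTwo n).memLp_pd).trans
    (ENNReal.ofReal_le_ofReal ?_)
  linarith [h.dirichletEnergy_add_le hu hVmem n, h.integral_mul_norm_sq_le hVmem hVM n]

lemma tendsto_integral_mul_norm_sq (h : IsWeylSequence (quasilinearOp ω u V) lam φ)
    (hu : MemSobolevTwo ∞ u) (hV : Continuous V) (hV0 : Tendsto V (cocompact _) (𝓝 0))
    (hlam : lam < ω) :
    Tendsto (fun n => ∫ x, V x * ‖φ n x‖ ^ 2) atTop (𝓝 0) := by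
  obtain ⟨D, hD⟩ := h.exists_eventually_lintegral_enorm_fderiv_sq_le hu hV hV0 hlam
  exact tendsto_integral_mul_norm_sq_of_weaklyNull
    (fun n => (h.memSobolevTwo n).contDiff.of_le one_le_two)
    (C := 1) (fun n => (h.lintegral_enorm_sq n).le) hD h.weaklyNull hV hV0

end IsWeylSequence

theorem not_isWeylSequence_quasilinearOp (hu : MemSobolevTwo ∞ u) (hV : Continuous V)
    (hV0 : Tendsto V (cocompact _) (𝓝 0)) (hlam : lam < ω) :
    ¬ IsWeylSequence (quasilinearOp ω u V) lam φ := by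
  intro h
  have hgap (n : ℕ) : ω - lam ≤ (∫ x, V x * ‖φ n x‖ ^ 2)
      + √(∫ x, ‖quasilinearOp ω u V (φ n) x - lam • φ n x‖ ^ 2) := by
    linarith [h.dirichletEnergy_add_le hu (memLp_top_of_tendsto_cocompact hV hV0) n,
      dirichletEnergy_nonneg (φ n)]
  have hlimit := (h.tendsto_integral_mul_norm_sq hu hV hV0 hlam).add h.tendsto_sqrt_residual
  linarith [ge_of_tendsto' hlimit hgap]

end WeylSequences

section Linearization

variable {N : ℕ} {ω p lam : ℝ} {u : EuclideanSpace ℝ (Fin N) → ℝ}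

/-- The potential `Δ(u²) + p u^{p-1}` in the linearized operator `L₊`. -/
def linearizedPotential (p : ℝ) (u : EuclideanSpace ℝ (Fin N) → ℝ)
    (x : EuclideanSpace ℝ (Fin N)) : ℝ :=
  lap (fun y => u y ^ 2) x + p * u x ^ (p - 1)

lemma LplusC_eq_quasilinearOp (ω p : ℝ) (u : EuclideanSpace ℝ (Fin N) → ℝ) :
    LplusC ω p u = quasilinearOp ω u (linearizedPotential p u) := by
  ext f x
  simp [LplusC, quasilinearOp, linearizedPotential, Complex.real_smul]

/-- A nonnegative `C²` function that vanishes at infinity together with its first and second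
derivatives; nonnegativity makes `u ^ (p - 1)` an honest real power. -/
structure IsDecayingProfile (u : EuclideanSpace ℝ (Fin N) → ℝ) : Prop where
  contDiff : ContDiff ℝ 2 u
  nonneg : ∀ x, 0 ≤ u x
  tendsto_iteratedFDeriv :
    ∀ k ≤ 2, Tendsto (iteratedFDeriv ℝ k u) (cocompact (EuclideanSpace ℝ (Fin N))) (𝓝 0)

namespace IsDecayingProfile

lemma memSobolevTwo_top (hu : IsDecayingProfile u) : MemSobolevTwo ∞ u :=
  memSobolevTwo_of_iteratedFDeriv hu.contDiff fun k hk =>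
    memLp_top_of_tendsto_cocompact (hu.contDiff.continuous_iteratedFDeriv (by exact_mod_cast hk))
      (hu.tendsto_iteratedFDeriv k hk)

lemma tendsto_zero (hu : IsDecayingProfile u) : Tendsto u (cocompact _) (𝓝 0) :=
  squeeze_zero_norm (fun _ => (norm_iteratedFDeriv_zero (𝕜 := ℝ)).ge)
    (tendsto_zero_iff_norm_tendsto_zero.1 (hu.tendsto_iteratedFDeriv 0 zero_le_two))

lemma tendsto_pd (hu : IsDecayingProfile u) (i : Fin N) :
    Tendsto (pd i u) (cocompact _) (𝓝 0) :=
  squeeze_zero_norm (norm_pd_le u i)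
    (tendsto_zero_iff_norm_tendsto_zero.1 (hu.tendsto_iteratedFDeriv 1 one_le_two))

lemma tendsto_pd_pd (hu : IsDecayingProfile u) (i j : Fin N) :
    Tendsto (pd i (pd j u)) (cocompact _) (𝓝 0) :=
  squeeze_zero_norm (norm_pd_pd_le hu.contDiff i j)
    (tendsto_zero_iff_norm_tendsto_zero.1 (hu.tendsto_iteratedFDeriv 2 le_rfl))

lemma tendsto_lap_sq (hu : IsDecayingProfile u) :
    Tendsto (lap fun y => u y ^ 2) (cocompact _) (𝓝 0) := by
  have hsum := tendsto_finsetSum Finset.univ fun (i : Fin N) _ =>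
    ((hu.tendsto_zero.mul (hu.tendsto_pd_pd i i)).const_mul 2).add
      (((hu.tendsto_pd i).mul (hu.tendsto_pd i)).const_mul 2)
  rw [funext (lap_sq hu.contDiff)]
  simpa using hsum

lemma tendsto_linearizedPotential (hu : IsDecayingProfile u) (hp : 1 < p) :
    Tendsto (linearizedPotential p u) (cocompact _) (𝓝 0) := by
  have hpow : Tendsto (fun x => u x ^ (p - 1)) (cocompact _) (𝓝 0) := by
    simpa [Real.zero_rpow (sub_pos.2 hp).ne'] using
      hu.tendsto_zero.rpow_const (.inr (sub_pos.2 hp).le)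
  have hsum := hu.tendsto_lap_sq.add (hpow.const_mul p)
  rw [mul_zero, add_zero] at hsum
  exact hsum

end IsDecayingProfile

lemma continuous_lap {f : EuclideanSpace ℝ (Fin N) → ℝ} (hf : ContDiff ℝ 2 f) :
    Continuous (lap f) :=
  continuous_finsetSum _ fun i _ => continuous_pd_pd hf i i

lemma continuous_linearizedPotential (hu : ContDiff ℝ 2 u) (hp : 1 ≤ p) :
    Continuous (linearizedPotential p u) :=
  (continuous_lap (hu.pow 2)).add
    ((hu.continuous.rpow_const fun _ => .inr (sub_nonneg.2 hp)).const_mul p)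

lemma IsGroundState.isDecayingProfile (hu : IsGroundState N ω p u) : IsDecayingProfile u where
  contDiff := contDiff_infty.1 hu.smooth 2
  nonneg x := (hu.pos x).le
  tendsto_iteratedFDeriv k _ := by
    obtain ⟨C, -, δ, hδ, hdecay⟩ := hu.decay k
    have hexp : Tendsto (fun x : EuclideanSpace ℝ (Fin N) => C * Real.exp (-δ * ‖x‖))
        (cocompact _) (𝓝 0) := by
      have hneg := (tendsto_norm_cocompact_atTop (E := EuclideanSpace ℝ (Fin N))
        ).const_mul_atTop_of_neg (neg_lt_zero.2 hδ)
      simpa using (Real.tendsto_exp_atBot.comp hneg).const_mul C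
    exact squeeze_zero_norm hdecay hexp

theorem stmt4_general (hp : 1 < p) (hu : IsDecayingProfile u) (hlam : lam < ω) :
    ¬ ∃ φ, IsWeylSequence (LplusC ω p u) lam φ := by
  rintro ⟨φ, hφ⟩
  rw [LplusC_eq_quasilinearOp] at hφ
  exact not_isWeylSequence_quasilinearOp hu.memSobolevTwo_top
    (continuous_linearizedPotential hu.contDiff hp.le) (hu.tendsto_linearizedPotential hp) hlam hφ

end Linearization

/-- There is no Weyl sequence for `L₊` at any `λ < ω`; in particular the continuous
spectrum of `L₊` is contained in `[ω, ∞)`. -/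
theorem stmt4 (N : ℕ) (hN : 2 ≤ N) (ω p : ℝ) (hω : 0 < ω) (hp : 1 < p)
    (hpmax : 3 ≤ N → p < (3 * (N : ℝ) + 2) / ((N : ℝ) - 2))
    (u : EuclideanSpace ℝ (Fin N) → ℝ) (hu : IsGroundState N ω p u)
    (lam : ℝ) (hlam : lam < ω) :
    ¬ ∃ φ : ℕ → EuclideanSpace ℝ (Fin N) → ℂ,
      (∀ n, ContDiff ℝ (⊤ : ℕ∞) (φ n)) ∧
      (∀ n, ∀ k : ℕ, k ≤ 2 → Integrable (fun x => ‖iteratedFDeriv ℝ k (φ n) x‖ ^ 2)) ∧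
      (∀ n, ∫ x, ‖φ n x‖ ^ 2 = 1) ∧
      (∀ g : EuclideanSpace ℝ (Fin N) → ℂ, Integrable (fun x => ‖g x‖ ^ 2) →
        Tendsto (fun n => ∫ x, φ n x * (starRingEnd ℂ) (g x)) atTop (𝓝 0)) ∧
      Tendsto (fun n => ∫ x, ‖LplusC ω p u (φ n) x - (lam : ℂ) * φ n x‖ ^ 2) atTop (𝓝 0) := by
  rintro ⟨φ, hsmooth, hint, hnorm, hweak, hres⟩
  exact stmt4_general hp hu.isDecayingProfile hlam ⟨φ, fun n =>
    memSobolevTwo_of_integrable_norm_iteratedFDeriv_sq (contDiff_infty.1 (hsmooth n) 2) (hint n),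
    hnorm, fun g hg => hweak g ((memLp_two_iff_integrable_sq_norm hg.1).1 hg), hres⟩

end
end
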